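/- arXiv:2107.09013 — 13 statements merged into one kernel-verified Lean document; each statement's English description precedes it below -/
import Mathlib

section
/- Let D be a cube-free positive integer. If some prime ℓ with ℓ ≡ 2 (mod 3) divides D, then the set X_1^D(ℤ)* is empty. -/
/-- `X_1^D(ℤ)`: triples `(x,y,z)` with `xyz ≠ 0`, `x² + 27y² = 4z³`, `gcd(y,z) = D`. -/
def X1D (D : ℕ) : Set (ℤ × ℤ × ℤ) :=
  {q | q.1 * q.2.1 * q.2.2 ≠ 0 ∧ q.1 ^ 2 + 27 * q.2.1 ^ 2 = 4 * q.2.2 ^ 3 ∧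
    Int.gcd q.2.1 q.2.2 = D}

/-- `X_1^D(ℤ)*`: members of `X_1^D(ℤ)` such that `ℓ² ∣ D → ℓ³ ∤ y` for every prime `ℓ`. -/
def X1Dstar (D : ℕ) : Set (ℤ × ℤ × ℤ) :=
  {q | q ∈ X1D D ∧ ∀ ℓ : ℕ, ℓ.Prime → ℓ ^ 2 ∣ D → ¬ ((ℓ : ℤ) ^ 3 ∣ q.2.1)}

/-- `X_D^1(ℤ)`: triples `(x,y,z)` with `xyz ≠ 0`, `x² + 27y² = 4Dz³`, `gcd(y,z) = 1`. -/
def XD1 (D : ℕ) : Set (ℤ × ℤ × ℤ) :=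
  {q | q.1 * q.2.1 * q.2.2 ≠ 0 ∧ q.1 ^ 2 + 27 * q.2.1 ^ 2 = 4 * (D : ℤ) * q.2.2 ^ 3 ∧
    Int.gcd q.2.1 q.2.2 = 1}

/-- `X_D^1(ℤ)*`: members of `X_D^1(ℤ)` such that `ℓ² ∣ D → ℓ ∤ y` for every prime `ℓ`. -/
def XD1star (D : ℕ) : Set (ℤ × ℤ × ℤ) :=
  {q | q ∈ XD1 D ∧ ∀ ℓ : ℕ, ℓ.Prime → ℓ ^ 2 ∣ D → ¬ ((ℓ : ℤ) ∣ q.2.1)}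

/-- `Y_D^1(ℤ)`: triples `(x,y,z)` with `xyz ≠ 0`, `x² + 3y² = 4Dz³`, `gcd(y,z) = 1`. -/
def YD1 (D : ℕ) : Set (ℤ × ℤ × ℤ) :=
  {q | q.1 * q.2.1 * q.2.2 ≠ 0 ∧ q.1 ^ 2 + 3 * q.2.1 ^ 2 = 4 * (D : ℤ) * q.2.2 ^ 3 ∧
    Int.gcd q.2.1 q.2.2 = 1}

/-- `Y_D^1(ℤ)*`: members of `Y_D^1(ℤ)` such that `ℓ² ∣ D → ℓ ∤ y` for every prime `ℓ`. -/
def YD1star (D : ℕ) : Set (ℤ × ℤ × ℤ) :=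
  {q | q ∈ YD1 D ∧ ∀ ℓ : ℕ, ℓ.Prime → ℓ ^ 2 ∣ D → ¬ ((ℓ : ℤ) ∣ q.2.1)}

/-- A natural number is cube-free if no prime cube divides it. -/
def Cubefree (D : ℕ) : Prop := ∀ p : ℕ, p.Prime → ¬ p ^ 3 ∣ D

/-- `D` is admissible when it is a positive cube-free integer of the form `D₁` or `9·D₁`,
where `D₁ = 1` or every prime factor of `D₁` is `≡ 1 (mod 3)`. -/
def Admissible (D : ℕ) : Prop :=
  0 < D ∧ Cubefree D ∧
    ∃ D₁ : ℕ, (D = D₁ ∨ D = 9 * D₁) ∧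
      (D₁ = 1 ∨ ∀ p : ℕ, p.Prime → p ∣ D₁ → p % 3 = 1)

/-- the level-raising map `[p]⁺` for `p = u² + 3v²`. -/
def pRaisePlus (u v : ℤ) (q : ℤ × ℤ × ℤ) : ℤ × ℤ × ℤ :=
  (u * q.1 + 3 * v * q.2.1, u * q.2.1 - v * q.1, q.2.2)

/-- the level-raising map `[p]⁻` for `p = u² + 3v²`. -/
def pRaiseMinus (u v : ℤ) (q : ℤ × ℤ × ℤ) : ℤ × ℤ × ℤ :=
  (u * q.1 - 3 * v * q.2.1, u * q.2.1 + v * q.1, q.2.2)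

open Classical in
/-- the level-lowering map `[p]_*` for `p = u² + 3v²`. -/
noncomputable def pLower (p u v : ℤ) (q : ℤ × ℤ × ℤ) : ℤ × ℤ × ℤ :=
  if p ∣ (u * q.2.1 + v * q.1) then
    ((u * q.1 - 3 * v * q.2.1) / p, (u * q.2.1 + v * q.1) / p, q.2.2)
  else
    ((u * q.1 + 3 * v * q.2.1) / p, (u * q.2.1 - v * q.1) / p, q.2.2)

theorem aux_inert (l : ℕ) (hp : l.Prime) (h3 : l % 3 = 2) (h2 : l ≠ 2) (a b : ℤ)
    (h : (l : ℤ) ∣ a ^ 2 + 27 * b ^ 2) : (l : ℤ) ∣ a ∧ (l : ℤ) ∣ b := by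
  haveI : Fact l.Prime := ⟨hp⟩
  have hE : (a : ZMod l) ^ 2 + 27 * (b : ZMod l) ^ 2 = 0 := by
    have := (ZMod.intCast_zmod_eq_zero_iff_dvd _ l).2 h
    push_cast at this
    exact this
  have n2 : (2 : ZMod l) ≠ 0 := by
    intro h
    have : ((2 : ℕ) : ZMod l) = 0 := by exact_mod_cast h
    rw [ZMod.natCast_eq_zero_iff] at this
    exact h2 ((Nat.prime_dvd_prime_iff_eq hp Nat.prime_two).1 this)
  have n3 : (3 : ZMod l) ≠ 0 := by
    intro h
    have : ((3 : ℕ) : ZMod l) = 0 := by exact_mod_cast h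
    rw [ZMod.natCast_eq_zero_iff] at this
    have := (Nat.prime_dvd_prime_iff_eq hp Nat.prime_three).1 this
    omega
  have hb : (b : ZMod l) = 0 := by
    by_contra hb
    obtain ⟨s, hs⟩ : ∃ s : ZMod l, s ^ 2 = -3 := by
      refine ⟨a / (3 * b), ?_⟩
      field_simp
      linear_combination hE
    obtain ⟨w, hw⟩ : ∃ w : ZMod l, 2 * w = -1 + s :=
      ⟨(-1 + s) / 2, by field_simp⟩
    have hq : w ^ 2 + w + 1 = 0 := by
      have : (2 * 2) * (w ^ 2 + w + 1) = 0 := by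
        linear_combination (2 * w + 1 + s) * hw + hs
      exact (mul_eq_zero.1 this).resolve_left (mul_ne_zero n2 n2)
    have hw3 : w ^ 3 = 1 := by linear_combination (w - 1) * hq
    have hw1 : w ≠ 1 := by
      rintro rfl
      exact n3 (by linear_combination hq)
    have ho : orderOf w = 3 := by
      haveI : Fact (Nat.Prime 3) := ⟨Nat.prime_three⟩
      exact orderOf_eq_prime hw3 hw1
    have hw0 : w ≠ 0 := by
      rintro rfl
      simp at hw3
    have := orderOf_dvd_of_pow_eq_one (ZMod.pow_card_sub_one_eq_one hw0)
    rw [ho] at this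
    have := hp.two_le
    omega
  have ha : (a : ZMod l) = 0 := by
    rw [hb] at hE
    simpa using hE
  exact ⟨(ZMod.intCast_zmod_eq_zero_iff_dvd _ l).1 ha,
    (ZMod.intCast_zmod_eq_zero_iff_dvd _ l).1 hb⟩

theorem aux_even (x y z : ℤ) (h : x ^ 2 + 27 * y ^ 2 = 8 * z) :
    (2 : ℤ) ∣ x ∧ (2 : ℤ) ∣ y := by
  rcases Int.even_or_odd' x with ⟨m, rfl | rfl⟩ <;>
  rcases Int.even_or_odd' y with ⟨n, rfl | rfl⟩
  · exact ⟨⟨m, rfl⟩, ⟨n, rfl⟩⟩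
  · exfalso; ring_nf at h; omega
  · exfalso; ring_nf at h; omega
  · exfalso
    obtain ⟨u, hu⟩ := Int.even_mul_succ_self m
    obtain ⟨v, hv⟩ := Int.even_mul_succ_self n
    have : 8 * u + 8 * 27 * v + 28 = 8 * z := by
      linear_combination h - 4 * hu - 4 * 27 * hv
    omega

theorem stmt_1 (D : ℕ) (hD : 0 < D) (hcf : Cubefree D)
    (hℓ : ∃ ℓ : ℕ, ℓ.Prime ∧ ℓ % 3 = 2 ∧ ℓ ∣ D) :
    X1Dstar D = ∅ := by
  obtain ⟨l, hp, h3, hlD⟩ := hℓ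
  rw [Set.eq_empty_iff_forall_notMem]
  rintro ⟨x, y, z⟩ ⟨⟨-, h, hg⟩, hs⟩
  simp only at h hg hs
  have hpz : Prime (l : ℤ) := Nat.prime_iff_prime_int.1 hp
  have l0 : (l : ℤ) ≠ 0 := hpz.ne_zero
  have key : (l : ℤ) ^ 3 ∣ y ∧ (l : ℤ) ^ 2 ∣ z := by
    have hdy : (l : ℤ) ∣ y :=
      (Int.natCast_dvd_natCast.2 (hg ▸ hlD)).trans (Int.gcd_dvd_left y z)
    have hdz : (l : ℤ) ∣ z :=
      (Int.natCast_dvd_natCast.2 (hg ▸ hlD)).trans (Int.gcd_dvd_right y z)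
    obtain ⟨y, rfl⟩ := hdy
    obtain ⟨z, rfl⟩ := hdz
    have hdx : (l : ℤ) ∣ x := by
      apply hpz.dvd_of_dvd_pow (n := 2)
      exact ⟨4 * l ^ 2 * z ^ 3 - 27 * l * y ^ 2, by linear_combination h⟩
    obtain ⟨x, rfl⟩ := hdx
    have h1 : x ^ 2 + 27 * y ^ 2 = 4 * l * z ^ 3 := by
      apply mul_left_cancel₀ (pow_ne_zero 2 l0)
      linear_combination h
    clear h hg hs
    by_cases h2 : l = 2
    · subst h2
      push_cast at *
      obtain ⟨⟨x, rfl⟩, ⟨y, rfl⟩⟩ := aux_even x y (z ^ 3) (by linear_combination h1)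
      have h2 : x ^ 2 + 27 * y ^ 2 = 2 * z ^ 3 := by linarith
      have hz : (2 : ℤ) ∣ z := by
        apply Int.prime_two.dvd_of_dvd_pow (n := 3)
        rcases Int.even_or_odd' x with ⟨m, rfl | rfl⟩ <;>
        rcases Int.even_or_odd' y with ⟨n, rfl | rfl⟩ <;> ring_nf at h2 ⊢ <;> omega
      obtain ⟨z, rfl⟩ := hz
      obtain ⟨⟨x, rfl⟩, ⟨y, rfl⟩⟩ := aux_even x y (2 * z ^ 3) (by linear_combination h2)
      exact ⟨⟨y, by ring⟩, ⟨z, by ring⟩⟩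
    · obtain ⟨⟨x, rfl⟩, ⟨y, rfl⟩⟩ := aux_inert l hp h3 h2 x y
        ⟨4 * z ^ 3, by linear_combination h1⟩
      have e2 : l * (x ^ 2 + 27 * y ^ 2) = 4 * z ^ 3 := by
        apply mul_left_cancel₀ l0
        linear_combination h1
      have hz : (l : ℤ) ∣ z := by
        have : (l : ℤ) ∣ 2 * (2 * z ^ 3) := ⟨x ^ 2 + 27 * y ^ 2, by linear_combination -e2⟩
        have n2 : ¬ (l : ℤ) ∣ 2 := by
          intro hh
          have : l ∣ 2 := by exact_mod_cast hh
          exact h2 ((Nat.prime_dvd_prime_iff_eq hp Nat.prime_two).1 this)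
        exact hpz.dvd_of_dvd_pow
          ((hpz.dvd_or_dvd ((hpz.dvd_or_dvd this).resolve_left n2)).resolve_left n2)
      obtain ⟨z, rfl⟩ := hz
      obtain ⟨⟨x, rfl⟩, ⟨y, rfl⟩⟩ := aux_inert l hp h3 h2 x y
        ⟨4 * l * z ^ 3, by
          apply mul_left_cancel₀ l0
          linear_combination e2⟩
      exact ⟨⟨y, by ring⟩, ⟨z, by ring⟩⟩
  refine hs l hp ?_ key.1
  rw [← hg]
  have : ((l ^ 2 : ℕ) : ℤ) ∣ (Int.gcd y z : ℤ) := by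
    apply Int.dvd_coe_gcd
    · push_cast
      exact (pow_dvd_pow _ (by norm_num)).trans key.1
    · push_cast
      exact key.2
  exact_mod_cast this
end

section
/- Let D be a cube-free positive integer. If 3 divides D but 9 does not divide D (i.e. 3 exactly divides D), then the set X_1^D(ℤ)* is empty. -/
theorem stmt_2 (D : ℕ) (hD : 0 < D) (hcf : Cubefree D)
    (h3 : 3 ∣ D) (h9 : ¬ 9 ∣ D) :
    X1Dstar D = ∅ := by
  ext ⟨x, y, z⟩
  simp only [Set.mem_empty_iff_false, iff_false]
  rintro ⟨⟨-, h, hg⟩, -⟩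
  simp only at h hg
  have p3 : Prime (3 : ℤ) := Int.prime_three
  have hy : (3 : ℤ) ∣ y := by
    have h1 : (3 : ℤ) ∣ (Int.gcd y z : ℤ) := by rw [hg]; exact_mod_cast h3
    exact h1.trans (Int.gcd_dvd_left ..)
  have hz : (3 : ℤ) ∣ z := by
    have h1 : (3 : ℤ) ∣ (Int.gcd y z : ℤ) := by rw [hg]; exact_mod_cast h3
    exact h1.trans (Int.gcd_dvd_right ..)
  obtain ⟨b, rfl⟩ := hy
  obtain ⟨c, rfl⟩ := hz
  have hx : (3 : ℤ) ∣ x := p3.dvd_of_dvd_pow (n := 2) ⟨36 * c ^ 3 - 81 * b ^ 2, by linarith⟩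
  obtain ⟨w, rfl⟩ := hx
  have hw : (3 : ℤ) ∣ w := p3.dvd_of_dvd_pow (n := 2) ⟨4 * c ^ 3 - 9 * b ^ 2, by linarith⟩
  obtain ⟨a, rfl⟩ := hw
  have hc : (3 : ℤ) ∣ c :=
    p3.dvd_of_dvd_pow (n := 3) ⟨a ^ 2 + 3 * b ^ 2 - c ^ 3, by linarith⟩
  obtain ⟨e, rfl⟩ := hc
  have ha : (3 : ℤ) ∣ a := p3.dvd_of_dvd_pow (n := 2) ⟨12 * e ^ 3 - b ^ 2, by linarith⟩
  obtain ⟨f, rfl⟩ := ha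
  have hb : (3 : ℤ) ∣ b := p3.dvd_of_dvd_pow (n := 2) ⟨4 * e ^ 3 - f ^ 2, by linarith⟩
  obtain ⟨g, rfl⟩ := hb
  apply h9
  have h2 : (9 : ℤ) ∣ (Int.gcd (3 * (3 * g)) (3 * (3 * e)) : ℤ) :=
    Int.dvd_coe_gcd ⟨g, by ring⟩ ⟨e, by ring⟩
  rw [hg] at h2
  exact_mod_cast h2
end

section
/- Let D be a positive integer with 3 ∤ D. Then the map (x,y,z) ↦ (3x, y, z) defines a bijection from the set S'_D = {(x,y,z) ∈ Y_D^1(ℤ)* : 3 ∤ y} onto X_{9D}^1(ℤ)*. -/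
theorem stmt_5 (D : ℕ) (hD : 0 < D) (h3 : ¬ 3 ∣ D) :
    Set.BijOn (fun q : ℤ × ℤ × ℤ => (3 * q.1, q.2.1, q.2.2))
      {q ∈ YD1star D | ¬ ((3 : ℤ) ∣ q.2.1)} (XD1star (9 * D)) := by
  refine ⟨?_, ?_, ?_⟩
  · rintro ⟨x, y, z⟩ ⟨⟨⟨h0, he, hg⟩, hl⟩, hy⟩
    simp only at h0 he hg hl hy
    refine ⟨⟨?_, ?_, hg⟩, ?_⟩
    · intro h
      simp only at h
      apply h0
      linarith
    · simp only
      push_cast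
      linear_combination 9 * he
    · intro l hp hd
      simp only
      by_cases h : l = 3
      · subst h
        exact_mod_cast hy
      · apply hl l hp
        have hc : Nat.Coprime (l ^ 2) 9 := by
          have := Nat.Coprime.pow 2 2 ((Nat.coprime_primes hp Nat.prime_three).2 h)
          simpa using this
        exact hc.dvd_of_dvd_mul_left hd
  · rintro ⟨x, y, z⟩ - ⟨x', y', z'⟩ - h
    simp only [Prod.mk.injEq] at h ⊢
    omega
  · rintro ⟨x, y, z⟩ ⟨⟨h0, he, hg⟩, hl⟩
    simp only at h0 he hg hl
    push_cast at he
    have hx : (3 : ℤ) ∣ x := by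
      apply Int.prime_three.dvd_of_dvd_pow (n := 2)
      exact ⟨12 * D * z ^ 3 - 9 * y ^ 2, by linear_combination he⟩
    obtain ⟨w, rfl⟩ := hx
    refine ⟨(w, y, z), ⟨⟨⟨?_, ?_, hg⟩, ?_⟩, ?_⟩, rfl⟩
    · intro h
      simp only at h
      apply h0
      linear_combination 3 * h
    · simp only
      linarith
    · intro l hp hd
      exact hl l hp (hd.mul_left 9)
    · have := hl 3 Nat.prime_three (Dvd.intro D rfl)
      exact_mod_cast this
end

section
/- The set X_1^9(ℤ)* equals the set of all triples (±27((s+t)³ − 9st²), 9(s³ − 3s²t + t³), 9(s² − st + t²)) where s and t range over coprime integers with 3 ∤ (s+t). -/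
abbrev Eis := QuadraticAlgebra ℤ (-1) (-1)

namespace Eis

lemma nrm (z : Eis) : QuadraticAlgebra.norm z = z.re ^ 2 - z.re * z.im + z.im ^ 2 := by
  rw [QuadraticAlgebra.norm_def]; ring

lemma nrm_nonneg (z : Eis) : 0 ≤ QuadraticAlgebra.norm z := by
  rw [nrm]; nlinarith [sq_nonneg (z.re - z.im), sq_nonneg (z.re), sq_nonneg z.im]

lemma nrm_pos {z : Eis} (hz : z ≠ 0) : 0 < QuadraticAlgebra.norm z := by
  refine lt_of_le_of_ne (nrm_nonneg z) fun h => hz ?_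
  rw [nrm] at h
  have h1 : z.re ^ 2 = 0 := by
    nlinarith [sq_nonneg (z.re - z.im), sq_nonneg (z.re), sq_nonneg z.im]
  have h2 : z.im ^ 2 = 0 := by
    nlinarith [sq_nonneg (z.re - z.im), sq_nonneg (z.re), sq_nonneg z.im]
  ext
  · simpa using h1
  · simpa using h2

lemma round_ex (c N : ℤ) (hN : 0 < N) : ∃ q r : ℤ, c = N * q + r ∧ -N ≤ 2 * r ∧ 2 * r ≤ N := by
  refine ⟨(2 * c + N) / (2 * N), c - N * ((2 * c + N) / (2 * N)), by ring, ?_, ?_⟩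
  · have := Int.mul_ediv_self_le (x := 2 * c + N) (k := 2 * N) (by omega)
    linarith
  · have := Int.lt_mul_ediv_self_add (x := 2 * c + N) (k := 2 * N) (by omega)
    linarith

lemma div_ex (a b : Eis) : ∃ q : Eis, (b = 0 → q = 0) ∧
    (b ≠ 0 → QuadraticAlgebra.norm (a - b * q) < QuadraticAlgebra.norm b) := by
  by_cases hb : b = 0
  · exact ⟨0, fun _ => rfl, fun h => absurd hb h⟩
  have hN := nrm_pos hb
  obtain ⟨q1, r1, h1, h1a, h1b⟩ := round_ex (a * star b).re _ hN
  obtain ⟨q2, r2, h2, h2a, h2b⟩ := round_ex (a * star b).im _ hN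
  refine ⟨⟨q1, q2⟩, fun h => absurd h hb, fun _ => ?_⟩
  have key : QuadraticAlgebra.norm (a - b * ⟨q1, q2⟩) * QuadraticAlgebra.norm b
      = r1 ^ 2 - r1 * r2 + r2 ^ 2 := by
    have e : (a - b * ⟨q1, q2⟩) * star b = (⟨r1, r2⟩ : Eis) := by
      have hr1 : r1 = (a * star b).re - QuadraticAlgebra.norm b * q1 := by linarith
      have hr2 : r2 = (a * star b).im - QuadraticAlgebra.norm b * q2 := by linarith
      rw [nrm] at hr1 hr2
      subst hr1 hr2
      ext <;> simp <;> ring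
    rw [← QuadraticAlgebra.norm_star b, ← map_mul, e, nrm]
  set N := QuadraticAlgebra.norm b
  have hb' : r1 ^ 2 - r1 * r2 + r2 ^ 2 < N * N := by
    have a1 : 4 * r1 ^ 2 ≤ N ^ 2 := by nlinarith
    have a2 : 4 * r2 ^ 2 ≤ N ^ 2 := by nlinarith
    have a3 : -(4 * (r1 * r2)) ≤ N ^ 2 := by nlinarith [sq_nonneg (r1 + r2)]
    nlinarith
  rw [← key] at hb'
  exact lt_of_mul_lt_mul_right hb' hN.le

noncomputable instance : EuclideanDomain Eis :=
  { (inferInstance : CommRing Eis), (inferInstance : Nontrivial Eis) with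
    quotient := fun a b => (div_ex a b).choose
    quotient_zero := fun a => (div_ex a 0).choose_spec.1 rfl
    remainder := fun a b => a - b * (div_ex a b).choose
    quotient_mul_add_remainder_eq := fun a b => by ring
    r := fun a b => (QuadraticAlgebra.norm a).natAbs < (QuadraticAlgebra.norm b).natAbs
    r_wellFounded := (measure (fun a : Eis => (QuadraticAlgebra.norm a).natAbs)).wf
    remainder_lt := fun a b hb => by
      have := (div_ex a b).choose_spec.2 hb
      have h2 := nrm_nonneg (a - b * (div_ex a b).choose)
      omega
    mul_left_not_lt := fun a b hb => by
      have h1 := nrm_pos hb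
      have h2 := nrm_nonneg a
      rw [map_mul]
      have : QuadraticAlgebra.norm a ≤ QuadraticAlgebra.norm a * QuadraticAlgebra.norm b := by
        nlinarith
      omega }

lemma unit_cases (u : Eisˣ) : (u : Eis) = ⟨1, 0⟩ ∨ (u : Eis) = ⟨-1, 0⟩ ∨ (u : Eis) = ⟨0, 1⟩ ∨
    (u : Eis) = ⟨0, -1⟩ ∨ (u : Eis) = ⟨1, 1⟩ ∨ (u : Eis) = ⟨-1, -1⟩ := by
  have h := (QuadraticAlgebra.isUnit_iff_norm_isUnit).1 u.isUnit
  have h0 := nrm_nonneg (u : Eis)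
  have h1 : QuadraticAlgebra.norm (u : Eis) = 1 := by
    rcases Int.isUnit_iff.1 h with h | h <;> omega
  rw [nrm] at h1
  clear h h0
  generalize (u : Eis) = w at h1 ⊢
  obtain ⟨a, b⟩ := w
  simp only at h1
  have ha : -1 ≤ a ∧ a ≤ 1 := by constructor <;> nlinarith [sq_nonneg (a - 2 * b)]
  have hb : -1 ≤ b ∧ b ≤ 1 := by constructor <;> nlinarith [sq_nonneg (b - 2 * a)]
  obtain ⟨ha1, ha2⟩ := ha
  obtain ⟨hb1, hb2⟩ := hb
  interval_cases a <;> interval_cases b <;> simp_all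

end Eis

lemma cube_param (X Y Z : ℤ) (h : X ^ 2 + 3 * Y ^ 2 = 4 * Z ^ 3) (hc : IsCoprime Y Z)
    (h3 : ¬ (3 : ℤ) ∣ Y) : ∃ s t : ℤ, Y = s ^ 3 - 3 * s ^ 2 * t + t ^ 3 ∧
      Z = s ^ 2 - s * t + t ^ 2 ∧
      (X = (s + t) ^ 3 - 9 * s * t ^ 2 ∨ X = -((s + t) ^ 3 - 9 * s * t ^ 2)) := by
  have hp3 : Prime (3 : ℤ) := Int.prime_three
  have h3Z : ¬ (3 : ℤ) ∣ Z := by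
    rintro ⟨k, rfl⟩
    have hX : (3 : ℤ) ∣ X := hp3.dvd_of_dvd_pow (n := 2) ⟨36 * k ^ 3 - Y ^ 2, by linarith⟩
    obtain ⟨m, rfl⟩ := hX
    exact h3 (hp3.dvd_of_dvd_pow (n := 2) ⟨12 * k ^ 3 - m ^ 2, by linarith⟩)
  obtain ⟨a, ha⟩ : ∃ a, X = 2 * a - Y := by
    have : (2 : ℤ) ∣ X + Y := by
      have : (2 : ℤ) ∣ (X + Y) ^ 2 := ⟨2 * Z ^ 3 - Y ^ 2 + X * Y, by linarith⟩
      exact Int.prime_two.dvd_of_dvd_pow this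
    obtain ⟨a, ha⟩ := this
    exact ⟨a, by linarith⟩
  have hn : a ^ 2 - a * Y + Y ^ 2 = Z ^ 3 := by subst ha; linarith
  have hc2 : IsCoprime (Z ^ 3) (3 * Y ^ 2) := by
    refine IsCoprime.mul_right ?_ (IsCoprime.pow hc.symm)
    exact (IsCoprime.pow_right ((hp3.coprime_iff_not_dvd).2 h3Z)).symm
  obtain ⟨u, v, huv⟩ := hc2
  have hcop : IsCoprime (⟨a, Y⟩ : Eis) (star (⟨a, Y⟩ : Eis)) := by
    refine ⟨(u : Eis) * star (⟨a, Y⟩ : Eis) - (v : Eis) * ((⟨a, Y⟩ : Eis) - 2 * star (⟨a, Y⟩ : Eis)),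
      - ((v : Eis) * star (⟨a, Y⟩ : Eis)), ?_⟩
    rw [← hn] at huv
    ext
    · simp [QuadraticAlgebra.re_one, QuadraticAlgebra.re_ofNat, QuadraticAlgebra.im_ofNat]; linear_combination huv
    · simp [QuadraticAlgebra.im_one, QuadraticAlgebra.re_ofNat, QuadraticAlgebra.im_ofNat]; ring
  have hmul : (⟨a, Y⟩ : Eis) * star (⟨a, Y⟩ : Eis) = (Z : Eis) ^ 3 := by
    rw [← Int.cast_pow, ← hn]
    ext
    · simp [pow_two]; ring
    · simp [pow_two]; try ring
  obtain ⟨d, w, hw⟩ := exists_associated_pow_of_mul_eq_pow' hcop hmul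
  obtain ⟨p, q⟩ := d
  have hnz : (p ^ 2 - p * q + q ^ 2) ^ 3 = Z ^ 3 := by
    have e := congrArg QuadraticAlgebra.norm hw
    have hu : QuadraticAlgebra.norm (w : Eis) = 1 := by
      rcases Eis.unit_cases w with h | h | h | h | h | h <;> rw [h, Eis.nrm] <;> norm_num
    rw [map_mul, hu, map_pow, Eis.nrm, Eis.nrm] at e
    simp only at e
    linarith
  have hZ : Z = p ^ 2 - p * q + q ^ 2 :=
    ((Odd.strictMono_pow (R := ℤ) (n := 3) (by decide)).injective hnz).symm
  have hre := congrArg QuadraticAlgebra.re hw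
  have him := congrArg QuadraticAlgebra.im hw
  rcases Eis.unit_cases w with h | h | h | h | h | h <;> rw [h] at hre him <;>
    simp [pow_succ] at hre him
  · exact absurd ⟨p ^ 2 * q - p * q ^ 2, by linarith⟩ h3
  · exact absurd ⟨-(p ^ 2 * q - p * q ^ 2), by linarith⟩ h3
  · exact ⟨p, q, by linarith, by linarith, Or.inr (by linarith)⟩
  · exact ⟨-p, -q, by linarith, by linarith, Or.inr (by linarith)⟩
  · exact ⟨q, p, by linarith, by linarith, Or.inl (by linarith)⟩
  · exact ⟨-q, -p, by linarith, by linarith, Or.inl (by linarith)⟩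

lemma back_aux (s t : ℤ) (hc : IsCoprime s t) (h3 : ¬ (3 : ℤ) ∣ s + t) :
    (s + t) ^ 3 - 9 * s * t ^ 2 ≠ 0 ∧ ¬ (3 : ℤ) ∣ s ^ 3 - 3 * s ^ 2 * t + t ^ 3 ∧
    s ^ 2 - s * t + t ^ 2 ≠ 0 ∧
    IsCoprime (s ^ 3 - 3 * s ^ 2 * t + t ^ 3) (s ^ 2 - s * t + t ^ 2) := by
  have hp3 : Prime (3 : ℤ) := Int.prime_three
  have h3Z : ¬ (3 : ℤ) ∣ s ^ 2 - s * t + t ^ 2 := by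
    rintro ⟨k, hk⟩
    exact h3 (hp3.dvd_of_dvd_pow (n := 2) ⟨k + s * t, by linarith⟩)
  refine ⟨fun h => ?_, ?_, fun h => h3Z (h ▸ dvd_zero _), ?_⟩
  · exact h3 (hp3.dvd_of_dvd_pow (n := 3) ⟨3 * s * t ^ 2, by linarith⟩)
  · rintro ⟨k, hk⟩
    exact h3 (hp3.dvd_of_dvd_pow (n := 3) ⟨k + 2 * s ^ 2 * t + s * t ^ 2, by linarith⟩)
  · have e : s ^ 3 - 3 * s ^ 2 * t + t ^ 3 =
        -(3 * s ^ 2 * t) + (s ^ 2 - s * t + t ^ 2) * (s + t) := by ring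
    rw [e]
    apply IsCoprime.add_mul_left_left
    apply IsCoprime.neg_left
    refine IsCoprime.mul_left (IsCoprime.mul_left ((hp3.coprime_iff_not_dvd).2 h3Z) ?_) ?_
    · apply IsCoprime.pow_left
      have : s ^ 2 - s * t + t ^ 2 = t ^ 2 + s * (s - t) := by ring
      rw [this]
      exact IsCoprime.add_mul_left_right hc.pow_right _
    · have : s ^ 2 - s * t + t ^ 2 = s ^ 2 + t * (t - s) := by ring
      rw [this]
      exact IsCoprime.add_mul_left_right hc.symm.pow_right _

theorem stmt_6 :
    {q : ℤ × ℤ × ℤ | q.1 * q.2.1 * q.2.2 ≠ 0 ∧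
        q.1 ^ 2 + 27 * q.2.1 ^ 2 = 4 * q.2.2 ^ 3 ∧
        Int.gcd q.2.1 q.2.2 = 9 ∧ ¬ ((27 : ℤ) ∣ q.2.1)} =
    {q : ℤ × ℤ × ℤ | ∃ s t : ℤ, IsCoprime s t ∧ ¬ (3 ∣ (s + t)) ∧
      (q = (27 * ((s + t) ^ 3 - 9 * s * t ^ 2), 9 * (s ^ 3 - 3 * s ^ 2 * t + t ^ 3),
          9 * (s ^ 2 - s * t + t ^ 2)) ∨
       q = (-(27 * ((s + t) ^ 3 - 9 * s * t ^ 2)), 9 * (s ^ 3 - 3 * s ^ 2 * t + t ^ 3),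
          9 * (s ^ 2 - s * t + t ^ 2)))} := by
  ext ⟨x, y, z⟩
  simp only [Set.mem_ofPred_eq, Prod.mk.injEq]
  constructor
  · rintro ⟨h0, h, hg, h27⟩
    obtain ⟨Y, rfl⟩ : (9 : ℤ) ∣ y := by
      have := Int.gcd_dvd_left (a := y) (b := z); rw [hg] at this; exact_mod_cast this
    obtain ⟨Z, rfl⟩ : (9 : ℤ) ∣ z := by
      have := Int.gcd_dvd_right (a := 9 * Y) (b := z); rw [hg] at this; exact_mod_cast this
    have hc : IsCoprime Y Z := by
      rw [Int.gcd_mul_left] at hg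
      rw [Int.isCoprime_iff_gcd_eq_one]
      simp at hg
      exact hg
    have h3 : ¬ (3 : ℤ) ∣ Y := by
      rintro ⟨k, rfl⟩
      exact h27 ⟨k, by ring⟩
    obtain ⟨X, rfl⟩ : (27 : ℤ) ∣ x := by
      have : (27 : ℤ) ^ 2 ∣ x ^ 2 := ⟨4 * Z ^ 3 - 3 * Y ^ 2, by linarith⟩
      exact (Int.pow_dvd_pow_iff (by norm_num)).1 this
    obtain ⟨s, t, hY, hZ, hX⟩ := cube_param X Y Z (by linarith) hc h3
    refine ⟨s, t, ?_, ?_, ?_⟩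
    · obtain ⟨u, v, huv⟩ := hc
      refine ⟨u * (s ^ 2 - 3 * s * t) + v * (s - t), u * t ^ 2 + v * t, ?_⟩
      rw [← huv, hY, hZ]; ring
    · rintro ⟨k, hk⟩
      apply h3
      obtain rfl : s = 3 * k - t := by linarith
      rw [hY]
      exact ⟨9 * k ^ 3 - 9 * k ^ 2 * t + 3 * k * t ^ 2 - (3 * k - t) ^ 2 * t, by ring⟩
    · rcases hX with hX | hX
      · left; subst hX hY hZ; exact ⟨rfl, rfl, rfl⟩
      · right; subst hX hY hZ; exact ⟨by ring, rfl, rfl⟩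
  · rintro ⟨s, t, hc, h3, h⟩
    obtain ⟨hX, hY, hZ, hYZ⟩ := back_aux s t hc h3
    have hY0 : s ^ 3 - 3 * s ^ 2 * t + t ^ 3 ≠ 0 := fun h => hY (h ▸ dvd_zero _)
    have hg : Int.gcd (9 * (s ^ 3 - 3 * s ^ 2 * t + t ^ 3)) (9 * (s ^ 2 - s * t + t ^ 2)) = 9 := by
      rw [Int.gcd_mul_left, Int.isCoprime_iff_gcd_eq_one.1 hYZ]; rfl
    have h27 : ¬ (27 : ℤ) ∣ 9 * (s ^ 3 - 3 * s ^ 2 * t + t ^ 3) := by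
      rintro ⟨k, hk⟩
      exact hY ⟨k, by linarith⟩
    rcases h with ⟨rfl, rfl, rfl⟩ | ⟨rfl, rfl, rfl⟩
    · refine ⟨mul_ne_zero (mul_ne_zero (mul_ne_zero (by norm_num) hX)
        (mul_ne_zero (by norm_num) hY0)) (mul_ne_zero (by norm_num) hZ), by ring, hg, h27⟩
    · refine ⟨mul_ne_zero (mul_ne_zero (neg_ne_zero.2 (mul_ne_zero (by norm_num) hX))
        (mul_ne_zero (by norm_num) hY0)) (mul_ne_zero (by norm_num) hZ), by ring, hg, h27⟩
end

section
/- Let D be a positive integer with 3 ∤ D. Then X_D^1(ℤ)* = {(9y, x, 3z) : (x,y,z) ∈ Y_D^1(ℤ)*} ∪ {(x, y/3, z) : (x,y,z) ∈ Y_D^1(ℤ)* and 3 ∣ y}. -/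
theorem gcd_one_iff (a b : ℤ) : Int.gcd a b = 1 ↔
    ∀ p : ℕ, p.Prime → (p : ℤ) ∣ a → (p : ℤ) ∣ b → False := by
  constructor
  · intro h p hp ha hb
    have := Int.dvd_coe_gcd ha hb
    rw [h] at this
    have h1 : p ∣ 1 := by exact_mod_cast this
    exact hp.one_lt.ne' (Nat.dvd_one.mp h1)
  · intro h
    by_contra hne
    obtain ⟨p, hp, hd⟩ := Nat.exists_prime_and_dvd hne
    have hd' : (p : ℤ) ∣ (Int.gcd a b : ℤ) := by exact_mod_cast hd
    exact h p hp (hd'.trans (Int.gcd_dvd_left a b)) (hd'.trans (Int.gcd_dvd_right a b))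

theorem dvd_three_sq {l : ℕ} (hl : l.Prime) {y : ℤ} (h : (l : ℤ) ∣ 3 * y) (h3 : l ≠ 3) :
    (l : ℤ) ∣ y := by
  have hp : Prime (l : ℤ) := Nat.prime_iff_prime_int.mp hl
  rcases hp.dvd_or_dvd h with h | h
  · exact absurd ((Nat.prime_dvd_prime_iff_eq hl Nat.prime_three).mp (by exact_mod_cast h)) h3
  · exact h

theorem stmt_7 (D : ℕ) (hD : 0 < D) (h3 : ¬ 3 ∣ D) :
    XD1star D =
      (fun q : ℤ × ℤ × ℤ => (9 * q.2.1, q.1, 3 * q.2.2)) '' (YD1star D) ∪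
      {q : ℤ × ℤ × ℤ | ∃ r ∈ YD1star D, (3 : ℤ) ∣ r.2.1 ∧ q = (r.1, r.2.1 / 3, r.2.2)} := by
  have p3 : Prime (3 : ℤ) := Int.prime_three
  have hne3 : ∀ l : ℕ, l ^ 2 ∣ D → l ≠ 3 := by
    rintro l h rfl
    exact h3 (dvd_trans (by norm_num) h)
  have h3D : ¬ (3 : ℤ) ∣ (D : ℤ) := by
    intro h; exact h3 (by exact_mod_cast h)
  ext ⟨x, y, z⟩
  simp only [XD1star, XD1, YD1star, YD1, Set.mem_union, Set.mem_image, Set.mem_setOf_eq,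
    Prod.exists, Prod.mk.injEq, gcd_one_iff]
  constructor
  · rintro ⟨⟨h0, he, hg⟩, hs⟩
    have hx0 : x ≠ 0 := by rintro rfl; simp at h0
    have hy0 : y ≠ 0 := by rintro rfl; simp at h0
    have hz0 : z ≠ 0 := by rintro rfl; simp at h0
    by_cases hz : (3 : ℤ) ∣ z
    · left
      obtain ⟨c, rfl⟩ := hz
      have h1 : (3 : ℤ) ∣ x := p3.dvd_of_dvd_pow (n := 2)
        ⟨36 * D * c ^ 3 - 9 * y ^ 2, by linear_combination he⟩
      obtain ⟨a, rfl⟩ := h1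
      have h2 : (3 : ℤ) ∣ a := p3.dvd_of_dvd_pow (n := 2)
        ⟨4 * D * c ^ 3 - y ^ 2, by linarith⟩
      obtain ⟨b, rfl⟩ := h2
      have he' : y ^ 2 + 3 * b ^ 2 = 4 * (D : ℤ) * c ^ 3 := by linarith
      refine ⟨y, b, c, ⟨⟨?_, he', ?_⟩, ?_⟩, by ring, rfl, rfl⟩
      · have hb : b ≠ 0 := by rintro rfl; simp at hx0
        have hc : c ≠ 0 := by rintro rfl; simp at hz0
        positivity
      · intro p hp hb hc
        have hpp : Prime (p : ℤ) := Nat.prime_iff_prime_int.mp hp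
        refine hg p hp (hpp.dvd_of_dvd_pow (n := 2) ?_) (hc.mul_left 3)
        have e : y ^ 2 = 4 * (D : ℤ) * c ^ 2 * c - 3 * b * b := by linear_combination he'
        rw [e]
        exact dvd_sub (hc.mul_left _) (hb.mul_left _)
      · intro l hl hlD hb
        have hpp : Prime (l : ℤ) := Nat.prime_iff_prime_int.mp hl
        refine hs l hl hlD (hpp.dvd_of_dvd_pow (n := 2) ?_)
        have hD' : (l : ℤ) ∣ D := by
          exact_mod_cast (dvd_pow_self l two_ne_zero).trans hlD
        have e : y ^ 2 = 4 * c ^ 3 * (D : ℤ) - 3 * b * b := by linear_combination he'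
        rw [e]
        exact dvd_sub (hD'.mul_left _) (hb.mul_left _)
    · right
      refine ⟨x, 3 * y, z, ⟨⟨by positivity, by linear_combination he, ?_⟩, ?_⟩,
        dvd_mul_right _ _, rfl, by simp, rfl⟩
      · intro p hp hy hpz
        by_cases h : p = 3
        · subst h; exact hz (by exact_mod_cast hpz)
        · exact hg p hp (dvd_three_sq hp hy h) hpz
      · intro l hl hlD hy
        exact hs l hl hlD (dvd_three_sq hl hy (hne3 l hlD))
  · rintro (⟨a, b, c, ⟨⟨h0, he, hg⟩, hs⟩, rfl, rfl, rfl⟩ |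
      ⟨a, b, c, ⟨⟨h0, he, hg⟩, hs⟩, ⟨d, rfl⟩, rfl, rfl, rfl⟩)
    · have hx0 : a ≠ 0 := by rintro rfl; simp at h0
      have hy0 : b ≠ 0 := by rintro rfl; simp at h0
      have hz0 : c ≠ 0 := by rintro rfl; simp at h0
      have key : (3 : ℤ) ∣ a → False := by
        rintro ⟨t, rfl⟩
        have hc : (3 : ℤ) ∣ c := by
          have : (3 : ℤ) ∣ 4 * D * c ^ 3 := ⟨3 * t ^ 2 + b ^ 2, by linear_combination -he⟩
          rcases p3.dvd_or_dvd this with h | h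
          · rcases p3.dvd_or_dvd h with h | h
            · norm_num at h
            · exact absurd h h3D
          · exact p3.dvd_of_dvd_pow h
        have hb : (3 : ℤ) ∣ b := by
          obtain ⟨s, rfl⟩ := hc
          exact p3.dvd_of_dvd_pow (n := 2) ⟨12 * D * s ^ 3 - t ^ 2, by linarith⟩
        exact hg 3 Nat.prime_three (by exact_mod_cast hb) (by exact_mod_cast hc)
      refine ⟨⟨by positivity, by linear_combination 27 * he, ?_⟩, ?_⟩
      · intro p hp ha hc
        by_cases h : p = 3
        · subst h; exact key (by exact_mod_cast ha)
        have hpp : Prime (p : ℤ) := Nat.prime_iff_prime_int.mp hp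
        have hc' := dvd_three_sq hp hc h
        refine hg p hp (hpp.dvd_of_dvd_pow (n := 2) (dvd_three_sq hp ?_ h)) hc'
        have e : 3 * b ^ 2 = 4 * (D : ℤ) * c ^ 2 * c - a * a := by linear_combination he
        rw [e]
        exact dvd_sub (hc'.mul_left _) (ha.mul_left _)
      · intro l hl hlD ha
        have hpp : Prime (l : ℤ) := Nat.prime_iff_prime_int.mp hl
        refine hs l hl hlD (hpp.dvd_of_dvd_pow (n := 2) (dvd_three_sq hl ?_ (hne3 l hlD)))
        have hD' : (l : ℤ) ∣ D := by
          exact_mod_cast (dvd_pow_self l two_ne_zero).trans hlD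
        have e : 3 * b ^ 2 = 4 * c ^ 3 * (D : ℤ) - a * a := by linear_combination he
        rw [e]
        exact dvd_sub (hD'.mul_left _) (ha.mul_left _)
    · have hd : 3 * d / 3 = d := by simp
      rw [hd]
      refine ⟨⟨?_, by linear_combination he, ?_⟩, ?_⟩
      · intro h; apply h0; linear_combination 3 * h
      · intro p hp h1 h2
        exact hg p hp (h1.mul_left 3) h2
      · intro l hl hlD h1
        exact hs l hl hlD (h1.mul_left 3)
end

section
/- Let D be a cube-free positive integer with 3 ∤ D. If some prime ℓ with ℓ ≡ 2 (mod 3) divides D, then the set Y_D^1(ℤ)* is empty. -/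
lemma aux_res (p : ℕ) (hp : p.Prime) (h2 : p % 3 = 2) (hne : p ≠ 2) (x y : ℤ)
    (h : (p : ℤ) ∣ x ^ 2 + 3 * y ^ 2) : (p : ℤ) ∣ y := by
  have := Fact.mk hp
  by_contra hy
  rw [← ZMod.intCast_zmod_eq_zero_iff_dvd] at h hy
  push_cast at h
  obtain ⟨t, ht⟩ : ∃ t : ZMod p, t ^ 2 = -3 := by
    refine ⟨(x : ZMod p) / y, ?_⟩
    rw [div_pow, div_eq_iff (pow_ne_zero 2 hy)]
    linear_combination h
  have two : (2 : ZMod p) ≠ 0 := by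
    intro h0
    have : ((2 : ℕ) : ZMod p) = 0 := by exact_mod_cast h0
    rw [ZMod.natCast_eq_zero_iff] at this
    exact hne ((Nat.prime_dvd_prime_iff_eq hp Nat.prime_two).1 this)
  have three : (3 : ZMod p) ≠ 0 := by
    intro h0
    have : ((3 : ℕ) : ZMod p) = 0 := by exact_mod_cast h0
    rw [ZMod.natCast_eq_zero_iff] at this
    have := (Nat.prime_dvd_prime_iff_eq hp Nat.prime_three).1 this
    omega
  have hc : (t - 1) ^ 3 = 2 ^ 3 := by linear_combination (t - 3) * ht
  have ht1 : t - 1 ≠ 0 := by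
    intro h0
    rw [h0] at hc
    exact pow_ne_zero 3 two (by rw [← hc]; simp)
  obtain ⟨k, hk⟩ : ∃ k, p - 1 = 3 * k + 1 := ⟨p / 3, by omega⟩
  have e1 := ZMod.pow_card_sub_one_eq_one ht1
  have e2 := ZMod.pow_card_sub_one_eq_one two
  rw [hk, pow_succ, pow_mul] at e1 e2
  rw [hc] at e1
  have e3 : t - 1 = 2 :=
    mul_left_cancel₀ (pow_ne_zero k (pow_ne_zero 3 two)) (e1.trans e2.symm)
  have e4 : (2 : ZMod p) * 2 * 3 = 0 := by
    have : t = 3 := by linear_combination e3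
    rw [this] at ht
    linear_combination ht
  exact mul_ne_zero (mul_ne_zero two two) three e4

theorem stmt_9 (D : ℕ) (hD : 0 < D) (hcf : Cubefree D) (h3 : ¬ 3 ∣ D)
    (hℓ : ∃ ℓ : ℕ, ℓ.Prime ∧ ℓ % 3 = 2 ∧ ℓ ∣ D) :
    YD1star D = ∅ := by
  obtain ⟨p, hp, hp3, hpD⟩ := hℓ
  rw [Set.eq_empty_iff_forall_notMem]
  rintro ⟨x, y, z⟩ ⟨⟨-, heq, hg⟩, hs⟩
  simp only at heq hg hs
  have hpZ : Prime (p : ℤ) := Nat.prime_iff_prime_int.1 hp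
  have hz : (p : ℤ) ∣ y → ¬ (p : ℤ) ∣ z := by
    intro h1 h2
    have := Int.dvd_coe_gcd h1 h2
    rw [hg] at this
    exact hpZ.not_isUnit (isUnit_of_dvd_one (by exact_mod_cast this))
  have key : (p : ℤ) ∣ y → (p : ℤ) ^ 2 ∣ D * z ^ 3 → False := by
    intro h1 h2
    have hcop : IsCoprime ((p : ℤ) ^ 2) (z ^ 3) :=
      ((hpZ.coprime_iff_not_dvd).2 (hz h1)).pow
    have := hcop.dvd_of_dvd_mul_right h2
    exact hs p hp (by exact_mod_cast this) h1
  obtain ⟨d, hd⟩ := hpD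
  by_cases h2 : p = 2
  · subst h2
    subst hd
    push_cast at *
    have hpar : x % 2 = 0 ∧ y % 2 = 0 := by
      have h8 : (8 : ℤ) ∣ x ^ 2 + 3 * y ^ 2 := ⟨d * z ^ 3, by linear_combination heq⟩
      rcases Int.even_or_odd' x with ⟨a, rfl | rfl⟩ <;>
      rcases Int.even_or_odd' y with ⟨b, rfl | rfl⟩
      · omega
      · ring_nf at h8; omega
      · ring_nf at h8; omega
      · have ha := Int.even_mul_succ_self a
        have hb := Int.even_mul_succ_self b
        obtain ⟨m, hm⟩ := ha
        obtain ⟨n, hn⟩ := hb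
        have : (2 * a + 1) ^ 2 + 3 * (2 * b + 1) ^ 2 = 8 * m + 24 * n + 4 := by
          linear_combination 4 * hm + 12 * hn
        omega
    obtain ⟨a, rfl⟩ := Int.dvd_of_emod_eq_zero hpar.1
    obtain ⟨b, rfl⟩ := Int.dvd_of_emod_eq_zero hpar.2
    refine key (Dvd.intro _ rfl) ?_
    have e : a ^ 2 + 3 * b ^ 2 = 2 * (d * z ^ 3) := by linarith
    have e' : (2 : ℤ) * d * z ^ 3 = a ^ 2 + 3 * b ^ 2 := by linarith
    rw [e']
    rcases Int.even_or_odd' a with ⟨m, rfl | rfl⟩ <;>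
      rcases Int.even_or_odd' b with ⟨n, rfl | rfl⟩
    · exact ⟨m ^ 2 + 3 * n ^ 2, by ring⟩
    · ring_nf at e; omega
    · ring_nf at e; omega
    · exact ⟨m ^ 2 + m + 3 * n ^ 2 + 3 * n + 1, by ring⟩
  · have hy : (p : ℤ) ∣ y := by
      refine aux_res p hp hp3 h2 x y ⟨4 * d * z ^ 3, ?_⟩
      rw [heq, hd]; push_cast; ring
    have hx : (p : ℤ) ∣ x := by
      refine hpZ.dvd_of_dvd_pow (n := 2) ?_
      have : x ^ 2 = p * (4 * d * z ^ 3) - 3 * y ^ 2 := by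
        rw [hd] at heq; push_cast at heq; linear_combination heq
      rw [this]
      exact dvd_sub (dvd_mul_right _ _) ((dvd_pow hy two_ne_zero).mul_left _)
    refine key hy ?_
    have h4 : (p : ℤ) ^ 2 ∣ 4 * (D * z ^ 3) := by
      rw [← mul_assoc, ← heq]
      exact dvd_add (pow_dvd_pow_of_dvd hx 2) ((pow_dvd_pow_of_dvd hy 2).mul_left _)
    have hc : IsCoprime ((p : ℤ) ^ 2) 4 := by
      have : IsCoprime (p : ℤ) 2 := by
        refine (hpZ.coprime_iff_not_dvd).2 fun h => h2 ?_
        exact (Nat.prime_dvd_prime_iff_eq hp Nat.prime_two).1 (by exact_mod_cast h)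
      have := this.pow (m := 2) (n := 2)
      norm_num at this ⊢
      exact this
    exact hc.dvd_of_dvd_mul_left h4
end

section
/- Let D be an admissible integer, p a prime with p ≡ 1 (mod 3), written p = u² + 3v² with u,v > 0 and gcd(u,3v) = 1, and let (x₀,y₀,z₀) ∈ Y_D^1(ℤ)*. If p ∤ D and p ∤ z₀, then both [p]⁺(x₀,y₀,z₀) = (ux₀ + 3vy₀, uy₀ − vx₀, z₀) and [p]⁻(x₀,y₀,z₀) = (ux₀ − 3vy₀, uy₀ + vx₀, z₀) belong to Y_{pD}^1(ℤ)*. If p ∤ D and p ∣ z₀, then exactly one of [p]⁺(x₀,y₀,z₀), [p]⁻(x₀,y₀,z₀) belongs to Y_{pD}^1(ℤ)*. If p ∣ D and p² ∤ D, then exactly one of [p]⁺(x₀,y₀,z₀), [p]⁻(x₀,y₀,z₀) belongs to Y_{pD}^1(ℤ)*. -/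
lemma raise_aux (D p : ℕ) (hp : p.Prime) (hp3 : p ≠ 3)
    (u v : ℤ) (hpuv : (p : ℤ) = u ^ 2 + 3 * v ^ 2)
    (x y z : ℤ) (h : (x, y, z) ∈ YD1star D) (hY : ¬ (p : ℤ) ∣ u * y - v * x) :
    (u * x + 3 * v * y, u * y - v * x, z) ∈ YD1star (p * D) := by
  obtain ⟨⟨h0, he, hg⟩, hs⟩ := h
  simp only at h0 he hg hs
  have hpp : Prime (p : ℤ) := Nat.prime_iff_prime_int.mp hp
  have hE : (u * x + 3 * v * y) ^ 2 + 3 * (u * y - v * x) ^ 2 = 4 * ((p : ℤ) * D) * z ^ 3 := by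
    have : (u * x + 3 * v * y) ^ 2 + 3 * (u * y - v * x) ^ 2
      = (u ^ 2 + 3 * v ^ 2) * (x ^ 2 + 3 * y ^ 2) := by ring
    rw [this, he, hpuv]; ring
  have hpy : u * (u * y - v * x) + v * (u * x + 3 * v * y) = p * y := by rw [hpuv]; ring
  generalize u * x + 3 * v * y = X at *
  generalize u * y - v * x = Y at *
  have hz : z ≠ 0 := by rintro rfl; simp at h0
  have key : ∀ ℓ : ℕ, ℓ.Prime → (ℓ : ℤ) ∣ Y → (ℓ : ℤ) ∣ D * z ^ 3 → (ℓ : ℤ) ∣ y := by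
    intro ℓ hl h1 h2
    have hlp : Prime (ℓ : ℤ) := Nat.prime_iff_prime_int.mp hl
    have hX : (ℓ : ℤ) ∣ X := by
      apply hlp.dvd_of_dvd_pow (n := 2)
      have : X ^ 2 = 4 * p * (D * z ^ 3) - Y * (3 * Y) := by linear_combination hE
      rw [this]
      exact dvd_sub (h2.mul_left _) (h1.mul_right _)
    have h3 : (ℓ : ℤ) ∣ p * y := by
      rw [← hpy]; exact dvd_add (h1.mul_left _) (hX.mul_left _)
    rcases hlp.dvd_or_dvd h3 with h4 | h4
    · have : ℓ = p := (Nat.prime_dvd_prime_iff_eq hl hp).mp (by exact_mod_cast h4)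
      subst this; exact absurd h1 hY
    · exact h4
  refine ⟨⟨?_, ?_, ?_⟩, ?_⟩
  · simp only
    refine mul_ne_zero (mul_ne_zero ?_ ?_) hz
    · rintro rfl
      have : (p : ℤ) ∣ 3 * Y ^ 2 := ⟨4 * D * z ^ 3, by linear_combination hE⟩
      rcases hpp.dvd_or_dvd this with h4 | h4
      · exact hp3 ((Nat.prime_dvd_prime_iff_eq hp Nat.prime_three).mp (by exact_mod_cast h4))
      · exact hY (hpp.dvd_of_dvd_pow h4)
    · rintro rfl; simp at hY
  · push_cast; exact hE
  · simp only
    by_contra hne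
    obtain ⟨ℓ, hl, hd⟩ := Nat.exists_prime_and_dvd hne
    have hd' : (ℓ : ℤ) ∣ (Int.gcd Y z : ℤ) := by exact_mod_cast hd
    have h1 := hd'.trans (Int.gcd_dvd_left ..)
    have h2 := hd'.trans (Int.gcd_dvd_right ..)
    have h3 := key ℓ hl h1 ((dvd_pow h2 three_ne_zero).mul_left _)
    have := Int.dvd_coe_gcd h3 h2
    rw [hg] at this
    exact hl.one_lt.ne' (by simpa using Int.natCast_dvd_natCast.mp this)
  · intro ℓ hl hd h1
    simp only at h1
    by_cases hlp : ℓ = p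
    · subst hlp; exact hY h1
    · have hc : Nat.Coprime (ℓ ^ 2) p := ((Nat.coprime_primes hl hp).mpr hlp).pow_left 2
      have h2 : ℓ ^ 2 ∣ D := hc.dvd_of_dvd_mul_left hd
      have h3 : (ℓ : ℤ) ∣ D := by exact_mod_cast (dvd_pow_self ℓ two_ne_zero).trans h2
      exact hs ℓ hl h2 (key ℓ hl h1 (h3.mul_right _))

lemma raise_not (D p : ℕ) (hp : p.Prime) (X Y z : ℤ) (hY : (p : ℤ) ∣ Y)
    (h : (p : ℤ) ∣ z ∨ p ∣ D) : (X, Y, z) ∉ YD1star (p * D) := by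
  rintro ⟨⟨-, -, hg⟩, hs⟩
  simp only at hg hs
  rcases h with h | h
  · have := Int.dvd_coe_gcd hY h
    rw [hg] at this
    exact hp.one_lt.ne' (by simpa using Int.natCast_dvd_natCast.mp this)
  · exact hs p hp (by rw [pow_two]; exact mul_dvd_mul_left p h) hY

theorem stmt_10 (D : ℕ) (hD : Admissible D) (p : ℕ) (hp : p.Prime) (hp1 : p % 3 = 1)
    (u v : ℤ) (hu : 0 < u) (hv : 0 < v) (hpuv : (p : ℤ) = u ^ 2 + 3 * v ^ 2)
    (hgcd : Int.gcd u (3 * v) = 1)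
    (x₀ y₀ z₀ : ℤ) (hxyz : (x₀, y₀, z₀) ∈ YD1star D) :
    (¬ p ∣ D → ¬ ((p : ℤ) ∣ z₀) →
      pRaisePlus u v (x₀, y₀, z₀) ∈ YD1star (p * D) ∧
      pRaiseMinus u v (x₀, y₀, z₀) ∈ YD1star (p * D)) ∧
    (¬ p ∣ D → (p : ℤ) ∣ z₀ →
      Xor' (pRaisePlus u v (x₀, y₀, z₀) ∈ YD1star (p * D))
        (pRaiseMinus u v (x₀, y₀, z₀) ∈ YD1star (p * D))) ∧
    (p ∣ D → ¬ p ^ 2 ∣ D →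
      Xor' (pRaisePlus u v (x₀, y₀, z₀) ∈ YD1star (p * D))
        (pRaiseMinus u v (x₀, y₀, z₀) ∈ YD1star (p * D))) := by
  have hpp : Prime (p : ℤ) := Nat.prime_iff_prime_int.mp hp
  have hp3 : p ≠ 3 := by rintro rfl; simp at hp1
  have hp2 : p ≠ 2 := by rintro rfl; simp at hp1
  have hplus := raise_aux D p hp hp3 u v hpuv x₀ y₀ z₀ hxyz
  have hminus := raise_aux D p hp hp3 u (-v) (by rw [hpuv]; ring) x₀ y₀ z₀ hxyz
  have e1 : u * x₀ + 3 * -v * y₀ = u * x₀ - 3 * v * y₀ := by ring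
  have e2 : u * y₀ - -v * x₀ = u * y₀ + v * x₀ := by ring
  rw [e1, e2] at hminus
  obtain ⟨⟨h0, he, hg⟩, hs⟩ := hxyz
  simp only at h0 he hg hs
  have hp2' : ¬ (p : ℤ) ∣ 2 := fun h =>
    hp2 ((Nat.prime_dvd_prime_iff_eq hp Nat.prime_two).mp (by exact_mod_cast h))
  have hpu : ¬ (p : ℤ) ∣ u := fun h => by
    have := Int.le_of_dvd hu h
    nlinarith
  have hpv : ¬ (p : ℤ) ∣ v := fun h => by
    have := Int.le_of_dvd hv h
    nlinarith
  have hyz : (p : ℤ) ∣ y₀ → (p : ℤ) ∣ z₀ → False := fun h1 h2 => by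
    have := Int.dvd_coe_gcd h1 h2
    rw [hg] at this
    exact hp.one_lt.ne' (by simpa using Int.natCast_dvd_natCast.mp this)
  have hboth : (p : ℤ) ∣ u * y₀ - v * x₀ → (p : ℤ) ∣ u * y₀ + v * x₀ →
      (p : ℤ) ∣ y₀ ∧ (p : ℤ) ∣ x₀ := fun h1 h2 => by
    have h3 : (p : ℤ) ∣ 2 * (u * y₀) := by
      have := dvd_add h1 h2
      rwa [show u * y₀ - v * x₀ + (u * y₀ + v * x₀) = 2 * (u * y₀) by ring] at this
    have h4 : (p : ℤ) ∣ 2 * (v * x₀) := by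
      have := dvd_sub h2 h1
      rwa [show u * y₀ + v * x₀ - (u * y₀ - v * x₀) = 2 * (v * x₀) by ring] at this
    exact ⟨((hpp.dvd_or_dvd ((hpp.dvd_or_dvd h3).resolve_left hp2')).resolve_left hpu),
      ((hpp.dvd_or_dvd ((hpp.dvd_or_dvd h4).resolve_left hp2')).resolve_left hpv)⟩
  have hone : (p : ℤ) ∣ D * z₀ ^ 3 →
      (p : ℤ) ∣ u * y₀ - v * x₀ ∨ (p : ℤ) ∣ u * y₀ + v * x₀ := fun h => by
    apply hpp.dvd_or_dvd
    have : (u * y₀ - v * x₀) * (u * y₀ + v * x₀) = p * y₀ ^ 2 - 4 * v ^ 2 * (D * z₀ ^ 3) := by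
      rw [hpuv]; linear_combination (-v ^ 2) * he
    rw [this]
    exact dvd_sub (Dvd.intro _ rfl) (h.mul_left _)
  have hxor : (p : ℤ) ∣ D * z₀ ^ 3 → ((p : ℤ) ∣ z₀ ∨ p ∣ D) →
      ¬ ((p : ℤ) ∣ y₀ ∧ (p : ℤ) ∣ x₀) →
      Xor' (pRaisePlus u v (x₀, y₀, z₀) ∈ YD1star (p * D))
        (pRaiseMinus u v (x₀, y₀, z₀) ∈ YD1star (p * D)) := fun h1 h2 h3 => by
    rcases hone h1 with h4 | h4
    · exact Or.inr ⟨hminus fun h5 => h3 (hboth h4 h5), raise_not D p hp _ _ _ h4 h2⟩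
    · exact Or.inl ⟨hplus fun h5 => h3 (hboth h5 h4), raise_not D p hp _ _ _ h4 h2⟩
  have h4D : (p : ℤ) ∣ 4 * D * z₀ ^ 3 → (p : ℤ) ∣ D * z₀ ^ 3 := fun h => by
    have : (p : ℤ) ∣ 2 * (2 * (D * z₀ ^ 3)) := by convert h using 1; ring
    exact (hpp.dvd_or_dvd ((hpp.dvd_or_dvd this).resolve_left hp2')).resolve_left hp2'
  refine ⟨fun hD1 hz => ?_, fun hD1 hz => ?_, fun hD1 hD2 => ?_⟩
  · have hn : ¬ (p : ℤ) ∣ D * z₀ ^ 3 := fun h => by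
      rcases hpp.dvd_or_dvd h with h | h
      · exact hD1 (by exact_mod_cast h)
      · exact hz (hpp.dvd_of_dvd_pow h)
    have hc : ∀ Y W : ℤ, Y * W = p * y₀ ^ 2 - v ^ 2 * (4 * D * z₀ ^ 3) → ¬ (p : ℤ) ∣ Y := by
      intro Y W e h
      have h1 : (p : ℤ) ∣ v ^ 2 * (4 * D * z₀ ^ 3) := by
        have : v ^ 2 * (4 * D * z₀ ^ 3) = p * y₀ ^ 2 - Y * W := by rw [e]; ring
        rw [this]
        exact dvd_sub (Dvd.intro _ rfl) (h.mul_right _)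
      rcases hpp.dvd_or_dvd h1 with h | h
      · exact hpv (hpp.dvd_of_dvd_pow h)
      · exact hn (h4D h)
    exact ⟨hplus (hc _ (u * y₀ + v * x₀) (by rw [hpuv]; linear_combination (-v ^ 2) * he)),
      hminus (hc _ (u * y₀ - v * x₀) (by rw [hpuv]; linear_combination (-v ^ 2) * he))⟩
  · exact hxor ((dvd_pow hz three_ne_zero).mul_left _) (Or.inl hz) fun h => hyz h.1 hz
  · have hD' : (p : ℤ) ∣ D := by exact_mod_cast hD1
    refine hxor (hD'.mul_right _) (Or.inr hD1) fun h => hyz h.1 ?_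
    obtain ⟨⟨a, ha⟩, b, hb⟩ := h
    obtain ⟨d, hd⟩ := hD1
    have hp0 : (p : ℤ) ≠ 0 := hpp.ne_zero
    have h1 : (p : ℤ) * (p * (b ^ 2 + 3 * a ^ 2)) = p * (2 * (2 * (d * z₀ ^ 3))) := by
      rw [ha, hb, hd] at he; push_cast at he; linear_combination he
    have h2 : (p : ℤ) ∣ 2 * (2 * (d * z₀ ^ 3)) := ⟨_, (mul_left_cancel₀ hp0 h1).symm⟩
    have h3 := (hpp.dvd_or_dvd ((hpp.dvd_or_dvd h2).resolve_left hp2')).resolve_left hp2'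
    rcases hpp.dvd_or_dvd h3 with h | h
    · exfalso; apply hD2
      rw [hd, pow_two]
      exact mul_dvd_mul_left p (by exact_mod_cast h)
    · exact hpp.dvd_of_dvd_pow h
end

section
/- Let D be an admissible integer, p a prime with p ≡ 1 (mod 3) and p² ∤ D, written p = u² + 3v² with u,v > 0 and gcd(u,3v) = 1. Suppose (x₀,y₀,z₀) ∈ Y_D^1(ℤ)* and [p]⁺(x₀,y₀,z₀) ∈ Y_{pD}^1(ℤ)* (respectively [p]⁻(x₀,y₀,z₀) ∈ Y_{pD}^1(ℤ)*). Then [p]_*([p]⁺(x₀,y₀,z₀)) = (x₀,y₀,z₀) (respectively [p]_*([p]⁻(x₀,y₀,z₀)) = (x₀,y₀,z₀)). -/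
theorem stmt_12 (D : ℕ) (hD : Admissible D) (p : ℕ) (hp : p.Prime) (hp1 : p % 3 = 1)
    (hp2 : ¬ p ^ 2 ∣ D) (u v : ℤ) (hu : 0 < u) (hv : 0 < v)
    (hpuv : (p : ℤ) = u ^ 2 + 3 * v ^ 2) (hgcd : Int.gcd u (3 * v) = 1)
    (x₀ y₀ z₀ : ℤ) (hxyz : (x₀, y₀, z₀) ∈ YD1star D) :
    (pRaisePlus u v (x₀, y₀, z₀) ∈ YD1star (p * D) →
      pLower (p : ℤ) u v (pRaisePlus u v (x₀, y₀, z₀)) = (x₀, y₀, z₀)) ∧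
    (pRaiseMinus u v (x₀, y₀, z₀) ∈ YD1star (p * D) →
      pLower (p : ℤ) u v (pRaiseMinus u v (x₀, y₀, z₀)) = (x₀, y₀, z₀)) := by
  have hpp : Prime (p : ℤ) := Nat.prime_iff_prime_int.mp hp
  have hp0 : (p : ℤ) ≠ 0 := hpp.ne_zero
  constructor
  · intro _
    have e1 : u * (u * y₀ - v * x₀) + v * (u * x₀ + 3 * v * y₀) = (p : ℤ) * y₀ := by
      rw [hpuv]; ring
    have e2 : u * (u * x₀ + 3 * v * y₀) - 3 * v * (u * y₀ - v * x₀) = (p : ℤ) * x₀ := by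
      rw [hpuv]; ring
    simp only [pLower, pRaisePlus, e1, e2]
    rw [if_pos (Dvd.intro _ rfl), Int.mul_ediv_cancel_left _ hp0, Int.mul_ediv_cancel_left _ hp0]
  · rintro ⟨⟨_, h2, h3⟩, h4⟩
    have e1 : u * (u * y₀ + v * x₀) - v * (u * x₀ - 3 * v * y₀) = (p : ℤ) * y₀ := by
      rw [hpuv]; ring
    have e2 : u * (u * x₀ - 3 * v * y₀) + 3 * v * (u * y₀ + v * x₀) = (p : ℤ) * x₀ := by
      rw [hpuv]; ring
    simp only [pRaiseMinus] at h2 h3 h4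
    simp only [pLower, pRaiseMinus, e1, e2]
    rw [if_neg, Int.mul_ediv_cancel_left _ hp0, Int.mul_ediv_cancel_left _ hp0]
    intro hdiv
    generalize u * y₀ + v * x₀ = Y at *
    generalize u * x₀ - 3 * v * y₀ = X at *
    have hnu : ¬ (p : ℤ) ∣ u := by
      intro h
      have := Int.le_of_dvd hu h
      nlinarith
    have hn2 : ¬ (p : ℤ) ∣ 2 := by
      intro h
      have h' : p ∣ 2 := by exact_mod_cast h
      have := (Nat.prime_dvd_prime_iff_eq hp Nat.prime_two).mp h'
      omega
    have hY : (p : ℤ) ∣ Y := by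
      have h : (p : ℤ) ∣ 2 * (u * Y) := by
        obtain ⟨k, hk⟩ := hdiv
        exact ⟨k + y₀, by linear_combination hk + e1⟩
      rcases hpp.dvd_or_dvd h with h | h
      · exact absurd h hn2
      · exact (hpp.dvd_or_dvd h).resolve_left hnu
    have hX : (p : ℤ) ∣ X := by
      apply hpp.dvd_of_dvd_pow (n := 2)
      obtain ⟨k, rfl⟩ := hY
      refine ⟨4 * D * z₀ ^ 3 - 3 * p * k ^ 2, ?_⟩
      push_cast at h2
      linear_combination h2
    have hDz : (p : ℤ) ∣ 2 * (2 * (D * z₀ ^ 3)) := by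
      obtain ⟨k, rfl⟩ := hY
      obtain ⟨l, rfl⟩ := hX
      refine ⟨l ^ 2 + 3 * k ^ 2, mul_left_cancel₀ hp0 ?_⟩
      push_cast at h2
      linear_combination -h2
    have hDz := (hpp.dvd_or_dvd ((hpp.dvd_or_dvd hDz).resolve_left hn2)).resolve_left hn2
    rcases hpp.dvd_or_dvd hDz with h | h
    · refine h4 p hp ?_ hY
      rw [sq]
      exact Nat.mul_dvd_mul_left _ (by exact_mod_cast h)
    · have hz := hpp.dvd_of_dvd_pow h
      have := Int.dvd_coe_gcd hY hz
      rw [h3] at this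
      exact hpp.not_dvd_one (by exact_mod_cast this)
end

section
/- Let D be an admissible integer, p a prime with p ≡ 1 (mod 3) and p ∣ D, written p = u² + 3v² with u,v > 0 and gcd(u,3v) = 1. Then for every (x₀,y₀,z₀) ∈ Y_D^1(ℤ)*, exactly one of [p]⁺([p]_*(x₀,y₀,z₀)) and [p]⁻([p]_*(x₀,y₀,z₀)) equals (x₀,y₀,z₀). -/
theorem aux_lower (p u v x y : ℤ) (hp : Prime p) (hu : 0 < u) (hv : 0 < v)
    (hpuv : p = u ^ 2 + 3 * v ^ 2) (h : p ∣ u * y + v * x) :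
    p ∣ u * x - 3 * v * y := by
  have h1 : p ∣ u * (u * x - 3 * v * y) := by
    obtain ⟨k, hk⟩ := h
    refine ⟨x - 3 * v * k, ?_⟩
    have : u * (u * x - 3 * v * y) = p * x - 3 * v * (u * y + v * x) := by
      rw [hpuv]; ring
    rw [this, hk]; ring
  rcases hp.dvd_or_dvd h1 with h2 | h2
  · exfalso
    have := Int.le_of_dvd hu h2
    nlinarith
  · exact h2

theorem stmt_13 (D : ℕ) (hD : Admissible D) (p : ℕ) (hp : p.Prime) (hp1 : p % 3 = 1)
    (hpD : p ∣ D) (u v : ℤ) (hu : 0 < u) (hv : 0 < v)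
    (hpuv : (p : ℤ) = u ^ 2 + 3 * v ^ 2) (hgcd : Int.gcd u (3 * v) = 1)
    (x₀ y₀ z₀ : ℤ) (hxyz : (x₀, y₀, z₀) ∈ YD1star D) :
    Xor' (pRaisePlus u v (pLower (p : ℤ) u v (x₀, y₀, z₀)) = (x₀, y₀, z₀))
      (pRaiseMinus u v (pLower (p : ℤ) u v (x₀, y₀, z₀)) = (x₀, y₀, z₀)) := by
  obtain ⟨⟨hne, heq, -⟩, -⟩ := hxyz
  simp only at hne heq
  have hP : Prime (p : ℤ) := Nat.prime_iff_prime_int.mp hp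
  have hp0 : (p : ℤ) ≠ 0 := hP.ne_zero
  have hx : x₀ ≠ 0 := by rintro rfl; simp at hne
  have hDp : (p : ℤ) ∣ (D : ℤ) := by exact_mod_cast hpD
  generalize (p : ℤ) = P at *
  have hprod : P ∣ (u * y₀ + v * x₀) * (u * y₀ - v * x₀) := by
    obtain ⟨k, hk⟩ := hDp
    refine ⟨y₀ ^ 2 - v ^ 2 * 4 * k * z₀ ^ 3, ?_⟩
    rw [hk] at heq
    linear_combination (-v ^ 2) * heq - y₀ ^ 2 * hpuv
  unfold pLower pRaisePlus pRaiseMinus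
  simp only
  split_ifs with h
  · obtain ⟨a, ha⟩ := aux_lower P u v x₀ y₀ hP hu hv hpuv h
    obtain ⟨b, hb⟩ := h
    rw [ha, hb, Int.mul_ediv_cancel_left _ hp0, Int.mul_ediv_cancel_left _ hp0]
    have e1 : u * a + 3 * v * b = x₀ := by
      apply mul_left_cancel₀ hp0
      linear_combination (-u) * ha - 3 * v * hb - x₀ * hpuv
    have e2 : u * b - v * a = y₀ := by
      apply mul_left_cancel₀ hp0
      linear_combination (-u) * hb + v * ha - y₀ * hpuv
    left
    refine ⟨by simp [e1, e2], ?_⟩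
    simp only [Prod.mk.injEq, not_and]
    rintro f1 f2
    have hb0 : v * b = 0 := by linarith
    have ha0 : v * a = 0 := by linarith
    have hb1 : b = 0 := by simpa [hv.ne'] using hb0
    have ha1 : a = 0 := by simpa [hv.ne'] using ha0
    subst hb1 ha1
    simp at e1
    exact absurd e1.symm hx
  · have h' := (hP.dvd_or_dvd hprod).resolve_left h
    have h3 : P ∣ u * (-y₀) + v * x₀ := by
      have := (dvd_neg.mpr h'); ring_nf at this ⊢; exact this
    obtain ⟨a, ha⟩ := aux_lower P u v x₀ (-y₀) hP hu hv hpuv h3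
    obtain ⟨b, hb⟩ := h'
    replace ha : u * x₀ + 3 * v * y₀ = P * a := by linarith
    rw [ha, hb, Int.mul_ediv_cancel_left _ hp0, Int.mul_ediv_cancel_left _ hp0]
    have e1 : u * a - 3 * v * b = x₀ := by
      apply mul_left_cancel₀ hp0
      linear_combination (-u) * ha + 3 * v * hb - x₀ * hpuv
    have e2 : u * b + v * a = y₀ := by
      apply mul_left_cancel₀ hp0
      linear_combination (-u) * hb - v * ha - y₀ * hpuv
    right
    refine ⟨by simp [e1, e2], ?_⟩
    simp only [Prod.mk.injEq, not_and]
    rintro f1 f2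
    have hb0 : v * b = 0 := by linarith
    have ha0 : v * a = 0 := by linarith
    have hb1 : b = 0 := by simpa [hv.ne'] using hb0
    have ha1 : a = 0 := by simpa [hv.ne'] using ha0
    subst hb1 ha1
    simp at e1
    exact absurd e1.symm hx
end

section
/- Let D be an admissible integer, p a prime with p ≡ 1 (mod 3) and p ∤ D, written p = u² + 3v² with u,v > 0 and gcd(u,3v) = 1, and let (x₀,y₀,z₀) ∈ Y_D^1(ℤ)*. Then [p]⁺([p]⁺(x₀,y₀,z₀)) ∈ Y_{p²D}^1(ℤ)* if and only if [p]⁺(x₀,y₀,z₀) ∈ Y_{pD}^1(ℤ)*; similarly, [p]⁻([p]⁻(x₀,y₀,z₀)) ∈ Y_{p²D}^1(ℤ)* if and only if [p]⁻(x₀,y₀,z₀) ∈ Y_{pD}^1(ℤ)*. -/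
theorem step_aux (N p : ℕ) (hp : p.Prime) (hp3 : p ≠ 3) (u v : ℤ)
    (hpuv : (p : ℤ) = u ^ 2 + 3 * v ^ 2) (x y z : ℤ) (h : (x, y, z) ∈ YD1star N)
    (hY : ¬ (p : ℤ) ∣ u * y - v * x) :
    pRaisePlus u v (x, y, z) ∈ YD1star (p * N) := by
  obtain ⟨⟨h0, heq, hg⟩, hs⟩ := h
  simp only at h0 heq hg hs
  have hpz : Prime (p : ℤ) := Nat.prime_iff_prime_int.mp hp
  have hz : z ≠ 0 := by rintro rfl; simp at h0
  have heq2 : (u * x + 3 * v * y) ^ 2 + 3 * (u * y - v * x) ^ 2 = 4 * (p : ℤ) * N * z ^ 3 := by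
    have : (u * x + 3 * v * y) ^ 2 + 3 * (u * y - v * x) ^ 2
      = (u ^ 2 + 3 * v ^ 2) * (x ^ 2 + 3 * y ^ 2) := by ring
    rw [this, heq, ← hpuv]; ring
  have hp3' : ¬ (p : ℤ) ∣ 3 := by
    intro hd
    have : p ∣ 3 := by exact_mod_cast hd
    exact hp3 ((Nat.prime_dvd_prime_iff_eq hp Nat.prime_three).mp this)
  have hX : ¬ (p : ℤ) ∣ u * x + 3 * v * y := by
    intro hd
    have h1 : (p : ℤ) ∣ 3 * (u * y - v * x) ^ 2 := by
      have e : 3 * (u * y - v * x) ^ 2 = p * (4 * N * z ^ 3)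
        - (u * x + 3 * v * y) * (u * x + 3 * v * y) := by linear_combination heq2
      rw [e]
      exact dvd_sub (dvd_mul_right _ _) (Dvd.dvd.mul_right hd _)
    rcases hpz.dvd_or_dvd h1 with h2 | h2
    · exact hp3' h2
    · exact hY (hpz.dvd_of_dvd_pow h2)
  have key : ∀ l : ℕ, l.Prime → (l : ℤ) ∣ u * y - v * x → (l : ℤ) ∣ N * z ^ 3 → (l : ℤ) ∣ y := by
    intro l hl hly hlz
    have hlp : Prime (l : ℤ) := Nat.prime_iff_prime_int.mp hl
    have h1 : (l : ℤ) ∣ (u * x + 3 * v * y) ^ 2 := by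
      have e : (u * x + 3 * v * y) ^ 2 = (N * z ^ 3) * (4 * p)
        - (u * y - v * x) * (3 * (u * y - v * x)) := by linear_combination heq2
      rw [e]
      exact dvd_sub (Dvd.dvd.mul_right hlz _) (Dvd.dvd.mul_right hly _)
    have h2 := hlp.dvd_of_dvd_pow h1
    have h3 : (l : ℤ) ∣ p * y := by
      have e : p * y = (u * y - v * x) * u + (u * x + 3 * v * y) * v := by rw [hpuv]; ring
      rw [e]
      exact dvd_add (Dvd.dvd.mul_right hly _) (Dvd.dvd.mul_right h2 _)
    rcases hlp.dvd_or_dvd h3 with h4 | h4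
    · have : l ∣ p := by exact_mod_cast h4
      rw [(Nat.prime_dvd_prime_iff_eq hl hp).mp this] at hly
      exact absurd hly hY
    · exact h4
  refine ⟨⟨?_, ?_, ?_⟩, ?_⟩
  · simp only [pRaisePlus]
    refine mul_ne_zero (mul_ne_zero ?_ ?_) hz
    · intro e; exact hX (by rw [e]; exact dvd_zero _)
    · intro e; exact hY (by rw [e]; exact dvd_zero _)
  · simp only [pRaisePlus]
    push_cast
    linear_combination heq2
  · simp only [pRaisePlus]
    by_contra hne
    obtain ⟨l, hl, hd⟩ := Nat.exists_prime_and_dvd hne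
    have ha : (l : ℤ) ∣ u * y - v * x := (Int.natCast_dvd_natCast.mpr hd).trans (Int.gcd_dvd_left _ _)
    have hb : (l : ℤ) ∣ z := (Int.natCast_dvd_natCast.mpr hd).trans (Int.gcd_dvd_right _ _)
    have hc := key l hl ha (Dvd.dvd.mul_left (dvd_pow hb (by norm_num)) _)
    have := Int.dvd_coe_gcd hc hb
    rw [hg] at this
    have : l ∣ 1 := by exact_mod_cast this
    exact hl.one_lt.ne' (Nat.dvd_one.mp this)
  · intro l hl hd hly
    simp only [pRaisePlus] at hly
    have hlp : l ≠ p := by rintro rfl; exact hY hly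
    have hc : Nat.Coprime (l ^ 2) p := Nat.Coprime.pow_left 2 ((Nat.coprime_primes hl hp).mpr hlp)
    have hd' : l ^ 2 ∣ N := hc.dvd_of_dvd_mul_left hd
    have hln : (l : ℤ) ∣ N := Int.natCast_dvd_natCast.mpr ((dvd_pow_self l (by norm_num)).trans hd')
    exact hs l hl hd' (key l hl hly (Dvd.dvd.mul_right hln _))

theorem plus_aux (D p : ℕ) (hp : p.Prime) (hp1 : p % 3 = 1)
    (hpD : ¬ p ∣ D) (u v : ℤ) (hpuv : (p : ℤ) = u ^ 2 + 3 * v ^ 2) (hpu : ¬ (p : ℤ) ∣ u)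
    (x₀ y₀ z₀ : ℤ) (hxyz : (x₀, y₀, z₀) ∈ YD1star D) :
    pRaisePlus u v (pRaisePlus u v (x₀, y₀, z₀)) ∈ YD1star (p ^ 2 * D) ↔
      pRaisePlus u v (x₀, y₀, z₀) ∈ YD1star (p * D) := by
  have hpz : Prime (p : ℤ) := Nat.prime_iff_prime_int.mp hp
  have hp3 : p ≠ 3 := by rintro rfl; omega
  have hp2 : ¬ (p : ℤ) ∣ 2 := by
    intro hd
    have : p ∣ 2 := by exact_mod_cast hd
    have := (Nat.prime_dvd_prime_iff_eq hp Nat.prime_two).mp this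
    omega
  have e : u * (u * y₀ - v * x₀) - v * (u * x₀ + 3 * v * y₀)
      = 2 * u * (u * y₀ - v * x₀) - p * y₀ := by rw [hpuv]; ring
  constructor
  · intro h
    apply step_aux D p hp hp3 u v hpuv x₀ y₀ z₀ hxyz
    intro hd
    apply h.2 p hp (dvd_mul_right _ _)
    simp only [pRaisePlus]
    rw [e]
    exact dvd_sub (Dvd.dvd.mul_left hd _) (dvd_mul_right _ _)
  · intro h
    have e2 : p ^ 2 * D = p * (p * D) := by ring
    rw [e2]
    apply step_aux (p * D) p hp hp3 u v hpuv _ _ _ h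
    rw [e]
    intro hd
    have h1 : (p : ℤ) ∣ 2 * u * (u * y₀ - v * x₀) := (dvd_sub_left (dvd_mul_right _ _)).mp hd
    have hy : (p : ℤ) ∣ u * y₀ - v * x₀ := by
      rcases hpz.dvd_or_dvd h1 with h2 | h2
      · rcases hpz.dvd_or_dvd h2 with h3 | h3
        · exact absurd h3 hp2
        · exact absurd h3 hpu
      · exact h2
    obtain ⟨⟨-, heq, hg⟩, -⟩ := h
    simp only [pRaisePlus] at heq hg
    push_cast at heq
    have hx : (p : ℤ) ∣ u * x₀ + 3 * v * y₀ := by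
      apply hpz.dvd_of_dvd_pow (n := 2)
      have e3 : (u * x₀ + 3 * v * y₀) ^ 2 = p * (4 * D * z₀ ^ 3)
        - (u * y₀ - v * x₀) * (3 * (u * y₀ - v * x₀)) := by linear_combination heq
      rw [e3]
      exact dvd_sub (dvd_mul_right _ _) (Dvd.dvd.mul_right hy _)
    have hz : (p : ℤ) ∣ z₀ := by
      obtain ⟨a, ha⟩ := hx
      obtain ⟨b, hb⟩ := hy
      rw [ha, hb] at heq
      have h4 : (p : ℤ) * (a ^ 2 + 3 * b ^ 2) = 2 * 2 * D * z₀ ^ 3 := by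
        apply mul_left_cancel₀ hpz.ne_zero
        linear_combination heq
      have h5 : (p : ℤ) ∣ 2 * 2 * D * z₀ ^ 3 := ⟨_, h4.symm⟩
      rcases hpz.dvd_or_dvd h5 with h6 | h6
      · rcases hpz.dvd_or_dvd h6 with h7 | h7
        · rcases hpz.dvd_or_dvd h7 with h8 | h8 <;> exact absurd h8 hp2
        · exact absurd (Int.natCast_dvd_natCast.mp h7) hpD
      · exact hpz.dvd_of_dvd_pow h6
    have := Int.dvd_coe_gcd hy hz
    rw [hg] at this
    have : p ∣ 1 := by exact_mod_cast this
    exact hp.one_lt.ne' (Nat.dvd_one.mp this)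

theorem minus_eq (u v : ℤ) (q : ℤ × ℤ × ℤ) : pRaiseMinus u v q = pRaisePlus u (-v) q := by
  simp only [pRaiseMinus, pRaisePlus]
  refine Prod.ext ?_ (Prod.ext ?_ rfl)
  · ring
  · ring

theorem stmt_15 (D : ℕ) (hD : Admissible D) (p : ℕ) (hp : p.Prime) (hp1 : p % 3 = 1)
    (hpD : ¬ p ∣ D) (u v : ℤ) (hu : 0 < u) (hv : 0 < v)
    (hpuv : (p : ℤ) = u ^ 2 + 3 * v ^ 2) (hgcd : Int.gcd u (3 * v) = 1)
    (x₀ y₀ z₀ : ℤ) (hxyz : (x₀, y₀, z₀) ∈ YD1star D) :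
    (pRaisePlus u v (pRaisePlus u v (x₀, y₀, z₀)) ∈ YD1star (p ^ 2 * D) ↔
      pRaisePlus u v (x₀, y₀, z₀) ∈ YD1star (p * D)) ∧
    (pRaiseMinus u v (pRaiseMinus u v (x₀, y₀, z₀)) ∈ YD1star (p ^ 2 * D) ↔
      pRaiseMinus u v (x₀, y₀, z₀) ∈ YD1star (p * D)) := by
  have hpz : Prime (p : ℤ) := Nat.prime_iff_prime_int.mp hp
  have hpu : ¬ (p : ℤ) ∣ u := by
    intro hd
    have h1 := Int.le_of_dvd hu hd
    nlinarith [pow_pos hv 2, sq_nonneg (u - 1)]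
  refine ⟨plus_aux D p hp hp1 hpD u v hpuv hpu x₀ y₀ z₀ hxyz, ?_⟩
  simp only [minus_eq]
  exact plus_aux D p hp hp1 hpD u (-v) (by rw [hpuv]; ring) hpu x₀ y₀ z₀ hxyz
end

section
/- Let D be an admissible integer with 3 ∤ D, and let u, v be positive integers with D = u² + 3v² and gcd(u, 3v) = 1. Suppose (x₀,y₀,z₀) ∈ Y_1^1(ℤ). Then (ux₀ − 3vy₀, uy₀ + vx₀, z₀) ∈ Y_D^1(ℤ)* if and only if gcd(D, z₀, uy₀ + vx₀) = 1; and (ux₀ + 3vy₀, uy₀ − vx₀, z₀) ∈ Y_D^1(ℤ)* if and only if gcd(D, z₀, uy₀ − vx₀) = 1. -/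
theorem aux17 (D : ℕ) (hD : Admissible D) (h3 : ¬ 3 ∣ D)
    (u v : ℤ) (hu : 0 < u) (hv : v ≠ 0) (hDuv : (D : ℤ) = u ^ 2 + 3 * v ^ 2)
    (hgcd : Int.gcd u (3 * v) = 1)
    (x y z : ℤ) (hxyz : (x, y, z) ∈ YD1 1) :
    ((u * x - 3 * v * y, u * y + v * x, z) ∈ YD1star D ↔
      Int.gcd (D : ℤ) ((Int.gcd z (u * y + v * x) : ℕ) : ℤ) = 1) := by
  obtain ⟨hne, heq, hg⟩ := hxyz
  simp only at hne heq hg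
  have hz : z ≠ 0 := right_ne_zero_of_mul hne
  have heq' : x ^ 2 + 3 * y ^ 2 = 4 * z ^ 3 := by rw [heq]; push_cast; ring
  have h3' : ¬ (3 : ℤ) ∣ (D : ℤ) := by
    intro h; exact h3 (by exact_mod_cast h)
  have h2 : ¬ (2 ∣ D) := by
    intro h
    obtain ⟨_, _, D₁, h1, h4⟩ := hD
    have h5 : 2 ∣ D₁ := by omega
    rcases h4 with h4 | h4
    · omega
    · have := h4 2 Nat.prime_two h5
      omega
  have hyz : ∀ p : ℤ, Prime p → p ∣ y → p ∣ z → False := by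
    intro p hp h1 h2
    have := Int.dvd_coe_gcd h1 h2
    rw [hg] at this
    exact hp.not_isUnit (isUnit_of_dvd_one (by simpa using this))
  have hcop : IsCoprime u (3 * v) := Int.isCoprime_iff_gcd_eq_one.2 hgcd
  have hcopv : IsCoprime u v := hcop.of_mul_right_right
  constructor
  · rintro ⟨⟨_, _, h⟩, _⟩
    simp only at h
    rw [Int.gcd_comm z, h]; simp
  · intro h
    have hall : ∀ p : ℤ, Prime p → p ∣ (D : ℤ) → p ∣ z → p ∣ u * y + v * x → False := by
      intro p hp h1 h2 h3
      have := Int.dvd_coe_gcd h1 (Int.dvd_coe_gcd h2 h3)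
      rw [h] at this
      exact hp.not_isUnit (isUnit_of_dvd_one (by simpa using this))
    have hX : u * x - 3 * v * y ≠ 0 := by
      intro h0
      have : u ∣ y := by
        have : u ∣ (3 * v) * y := ⟨x, by linarith⟩
        exact hcop.dvd_of_dvd_mul_left this
      obtain ⟨k, rfl⟩ := this
      have hx : x = 3 * v * k := by
        apply mul_left_cancel₀ hu.ne'
        linarith
      have e : 3 * (k ^ 2 * D) = 4 * z ^ 3 := by
        rw [← heq', hx, hDuv]; ring
      have p3 : Prime (3 : ℤ) := Int.prime_three
      have hz3 : (3 : ℤ) ∣ z := by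
        apply p3.dvd_of_dvd_pow (n := 3)
        omega
      obtain ⟨w, rfl⟩ := hz3
      have hk : (3 : ℤ) ∣ k ^ 2 * D := ⟨12 * w ^ 3, by linarith⟩
      have hk : (3 : ℤ) ∣ k := p3.dvd_of_dvd_pow ((p3.dvd_or_dvd hk).resolve_right h3')
      exact hyz 3 p3 (hk.mul_left u) ⟨w, rfl⟩
    have hY : u * y + v * x ≠ 0 := by
      intro h0
      have hc : IsCoprime (D : ℤ) z := by
        rw [h0] at h
        rw [Int.isCoprime_iff_gcd_eq_one]
        simpa [Int.gcd, Int.natAbs_abs] using h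
      have : u ∣ x := by
        have : u ∣ v * x := ⟨-y, by linarith⟩
        exact hcopv.dvd_of_dvd_mul_left this
      obtain ⟨k, rfl⟩ := this
      have hy : y = - v * k := by
        apply mul_left_cancel₀ hu.ne'
        linarith
      have e : (D : ℤ) * k ^ 2 = 4 * z ^ 3 := by
        rw [← heq', hy, hDuv]; ring
      have hd : (D : ℤ) ∣ 4 := (hc.pow_right (n := 3)).dvd_of_dvd_mul_right ⟨_, e.symm⟩
      have hd' : D ∣ 4 := by exact_mod_cast hd
      have hle : D ≤ 4 := Nat.le_of_dvd (by norm_num) hd'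
      have hge : (4 : ℤ) ≤ D := by
        have := Int.one_le_abs hv
        have : 1 ≤ v ^ 2 := by rw [← sq_abs]; nlinarith
        nlinarith
      have : D = 4 := by omega
      omega
    refine ⟨⟨?_, ?_, ?_⟩, ?_⟩
    · exact mul_ne_zero (mul_ne_zero hX hY) hz
    · simp only
      rw [hDuv]
      linear_combination (u ^ 2 + 3 * v ^ 2) * heq'
    · simp only
      rw [← Int.isCoprime_iff_gcd_eq_one]
      apply isCoprime_of_prime_dvd
      · rintro ⟨_, h⟩; exact hz h
      · intro p hp h1 h2
        have hX2 : p ∣ (u * x - 3 * v * y) ^ 2 := by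
          have : (u * x - 3 * v * y) ^ 2 = z * (4 * D * z ^ 2) - (u * y + v * x) * (3 * (u * y + v * x)) := by
            rw [hDuv]
            linear_combination (u ^ 2 + 3 * v ^ 2) * heq'
          rw [this]
          exact dvd_sub (h2.mul_right _) (h1.mul_right _)
        have hX1 := hp.dvd_of_dvd_pow hX2
        have : p ∣ D * y := by
          have : D * y = (u * y + v * x) * u - (u * x - 3 * v * y) * v := by
            rw [hDuv]; ring
          rw [this]
          exact dvd_sub (h1.mul_right _) (hX1.mul_right _)
        rcases hp.dvd_or_dvd this with h' | h'
        · exact hall p hp h' h2 h1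
        · exact hyz p hp h' h2
    · intro l hl hlD hlY
      simp only at hlY
      have hp : Prime (l : ℤ) := Nat.prime_iff_prime_int.1 hl
      have hlD1 : l ∣ D := (Dvd.intro_left l (by ring)).trans hlD
      have hlD2 : (l : ℤ) ∣ D := by exact_mod_cast hlD1
      have hlv : ¬ (l : ℤ) ∣ v := by
        intro hv
        have : (l : ℤ) ∣ u ^ 2 := by
          have e : u ^ 2 = D - v * (3 * v) := by rw [hDuv]; ring
          rw [e]; exact dvd_sub hlD2 (hv.mul_right _)
        exact hp.not_isUnit (hcopv.isUnit_of_dvd' (hp.dvd_of_dvd_pow this) hv)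
      have hl2 : ¬ (l : ℤ) ∣ 2 := by
        intro h
        have h : l ∣ 2 := by exact_mod_cast h
        have := (Nat.prime_dvd_prime_iff_eq hl Nat.prime_two).1 h
        subst this
        exact h2 hlD1
      have : (l : ℤ) ∣ (2 * 2 * z ^ 3) * v ^ 2 := by
        have e : (2 * 2 * z ^ 3) * v ^ 2 = (u * y + v * x) * (v * x - u * y) + D * y ^ 2 := by
          rw [hDuv]
          linear_combination (-v ^ 2) * heq'
        rw [e]
        exact dvd_add (hlY.mul_right _) (hlD2.mul_right _)
      have h1 := (hp.dvd_or_dvd this).resolve_right fun h => hlv (hp.dvd_of_dvd_pow h)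
      have h1 := (hp.dvd_or_dvd h1).resolve_left fun h => (hp.dvd_or_dvd h).elim hl2 hl2
      exact hall l hp hlD2 (hp.dvd_of_dvd_pow h1) hlY

theorem stmt_17 (D : ℕ) (hD : Admissible D) (h3 : ¬ 3 ∣ D)
    (u v : ℤ) (hu : 0 < u) (hv : 0 < v) (hDuv : (D : ℤ) = u ^ 2 + 3 * v ^ 2)
    (hgcd : Int.gcd u (3 * v) = 1)
    (x₀ y₀ z₀ : ℤ) (hxyz : (x₀, y₀, z₀) ∈ YD1 1) :
    (pRaiseMinus u v (x₀, y₀, z₀) ∈ YD1star D ↔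
      Int.gcd (D : ℤ) ((Int.gcd z₀ (u * y₀ + v * x₀) : ℕ) : ℤ) = 1) ∧
    (pRaisePlus u v (x₀, y₀, z₀) ∈ YD1star D ↔
      Int.gcd (D : ℤ) ((Int.gcd z₀ (u * y₀ - v * x₀) : ℕ) : ℤ) = 1) := by
  refine ⟨aux17 D hD h3 u v hu hv.ne' hDuv hgcd x₀ y₀ z₀ hxyz, ?_⟩
  have := aux17 D hD h3 u (-v) hu (by omega) (by rw [hDuv]; ring)
    (by rw [← hgcd, mul_neg, Int.gcd_neg]) x₀ y₀ z₀ hxyz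
  have e1 : u * x₀ - 3 * (-v) * y₀ = u * x₀ + 3 * v * y₀ := by ring
  have e2 : u * y₀ + (-v) * x₀ = u * y₀ - v * x₀ := by ring
  rw [e1, e2] at this
  exact this
end

section
/- Let f(X) = X³ − aX + b ∈ ℤ[X] be a cubic polynomial whose discriminant 4a³ − 27b² is a perfect square. If d = gcd(a,b) > 1 is cube-free and for each prime ℓ with ℓ² ∣ d we have ℓ³ ∤ b, then f(X) is irreducible over ℚ. -/
theorem aux18 (a b r : ℤ) (hsq : ∃ c : ℤ, 4 * a ^ 3 - 27 * b ^ 2 = c ^ 2)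
    (hd : 1 < Int.gcd a b)
    (hl : ∀ ℓ : ℕ, ℓ.Prime → ℓ ^ 2 ∣ Int.gcd a b → ¬ ((ℓ : ℤ) ^ 3 ∣ b))
    (hr : r ^ 3 - a * r + b = 0) : False := by
  obtain ⟨c, hc⟩ := hsq
  have hb : b = a * r - r ^ 3 := by linarith
  have hs : ∃ s : ℤ, s ^ 2 = 4 * a - 3 * r ^ 2 := by
    by_cases h0 : 3 * r ^ 2 - a = 0
    · exact ⟨3 * r, by linarith⟩
    · have h1 : (3 * r ^ 2 - a) ^ 2 * (4 * a - 3 * r ^ 2) = c ^ 2 := by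
        rw [← hc, hb]; ring
      have h2 : (3 * r ^ 2 - a) ∣ c :=
        (Int.pow_dvd_pow_iff two_ne_zero).1 ⟨_, h1.symm⟩
      obtain ⟨s, rfl⟩ := h2
      refine ⟨s, ?_⟩
      rw [mul_pow] at h1
      exact (mul_left_cancel₀ (pow_ne_zero 2 h0) h1).symm
  obtain ⟨s, hs⟩ := hs
  have ht : ∃ t : ℤ, s = 2 * t + r := by
    have h1 : Even ((s - r) * (s + r)) := ⟨2 * (a - r ^ 2), by linarith⟩
    rcases Int.even_mul.1 h1 with ⟨k, hk⟩ | ⟨k, hk⟩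
    · exact ⟨k, by linarith⟩
    · exact ⟨k - r, by linarith⟩
  obtain ⟨t, rfl⟩ := ht
  have ha : a = t ^ 2 + r * t + r ^ 2 := by linarith
  obtain ⟨p, hp, hpd⟩ := Nat.exists_prime_and_dvd (show Int.gcd a b ≠ 1 by omega)
  have hpi : Prime (p : ℤ) := Nat.prime_iff_prime_int.1 hp
  have hpa : (p : ℤ) ∣ a := (Int.natCast_dvd_natCast.2 hpd).trans (Int.gcd_dvd_left ..)
  have hpb : (p : ℤ) ∣ b := (Int.natCast_dvd_natCast.2 hpd).trans (Int.gcd_dvd_right ..)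
  have hpr : (p : ℤ) ∣ r := by
    apply hpi.dvd_of_dvd_pow (n := 3)
    rw [show r ^ 3 = a * r - b by linarith]
    exact dvd_sub (hpa.mul_right _) hpb
  have hpt : (p : ℤ) ∣ t := by
    apply hpi.dvd_of_dvd_pow (n := 2)
    rw [show t ^ 2 = a - r * (t + r) by linarith]
    exact dvd_sub hpa (hpr.mul_right _)
  obtain ⟨u, rfl⟩ := hpr
  obtain ⟨v, rfl⟩ := hpt
  have h2 : (p : ℤ) ^ 2 ∣ a := ⟨v ^ 2 + u * v + u ^ 2, by rw [ha]; ring⟩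
  have h3 : (p : ℤ) ^ 3 ∣ b := ⟨(v ^ 2 + u * v + u ^ 2) * u - u ^ 3, by rw [hb, ha]; ring⟩
  refine hl p hp ?_ h3
  have := Int.dvd_coe_gcd h2 ((pow_dvd_pow _ (by norm_num)).trans h3)
  exact_mod_cast this

open Polynomial in
theorem stmt_18 (a b : ℤ) (hsq : ∃ c : ℤ, 4 * a ^ 3 - 27 * b ^ 2 = c ^ 2)
    (hd : 1 < Int.gcd a b)
    (hcf : ∀ ℓ : ℕ, ℓ.Prime → ¬ ℓ ^ 3 ∣ Int.gcd a b)
    (hl : ∀ ℓ : ℕ, ℓ.Prime → ℓ ^ 2 ∣ Int.gcd a b → ¬ ((ℓ : ℤ) ^ 3 ∣ b)) :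
    Irreducible (X ^ 3 - C (a : ℚ) * X + C (b : ℚ)) := by
  have hm : (X ^ 3 - C a * X + C b : ℤ[X]).Monic := by monicity!
  have hdeg : (X ^ 3 - C (a : ℚ) * X + C (b : ℚ)).natDegree = 3 := by compute_degree!
  rw [Polynomial.irreducible_iff_roots_eq_zero_of_degree_le_three (by omega) (by omega)]
  refine Multiset.eq_zero_of_forall_notMem fun x hx => ?_
  have hx := Polynomial.isRoot_of_mem_roots hx
  have h1 : aeval x (X ^ 3 - C a * X + C b : ℤ[X]) = 0 := by
    simpa [Polynomial.IsRoot] using hx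
  obtain ⟨r, rfl⟩ := isInteger_of_is_root_of_monic hm h1
  refine aux18 a b r hsq hd hl ?_
  simp at h1
  exact_mod_cast h1
end

section
/- Let D > 1 be an admissible integer. Then for any a, b ∈ ℤ: the polynomial X³ − aX + b is irreducible over ℚ with gcd(a,b) = D, discriminant 4a³ − 27b² a nonzero perfect square, and satisfying (for every prime ℓ, ℓ² ∣ a implies ℓ³ ∤ b), if and only if there exists an integer c with (c, b, a) ∈ X_1^D(ℤ)*. -/
theorem aux_root (D : ℕ) (hD : Admissible D) (hD1 : 1 < D) (a b c r : ℤ) (hc : c ≠ 0)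
    (h : c ^ 2 + 27 * b ^ 2 = 4 * a ^ 3) (hg : Int.gcd b a = D)
    (hs : ∀ ℓ : ℕ, ℓ.Prime → ℓ ^ 2 ∣ D → ¬ ((ℓ : ℤ) ^ 3 ∣ b))
    (hr : r ^ 3 - a * r + b = 0) : False := by
  obtain ⟨p, hp, hpD⟩ := Nat.exists_prime_and_dvd (show D ≠ 1 by omega)
  have hpi : Prime (p : ℤ) := Nat.prime_iff_prime_int.mp hp
  have hp2 : p ≠ 2 := by
    rintro rfl
    obtain ⟨-, -, D₁, h1, h2⟩ := hD
    have h3 : 2 ∣ D₁ := by omega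
    rcases h2 with h2 | h2
    · omega
    · have := h2 2 hp h3
      omega
  have hDb : (D : ℤ) ∣ b := hg ▸ Int.gcd_dvd_left ..
  have hDa : (D : ℤ) ∣ a := hg ▸ Int.gcd_dvd_right ..
  have hpDi : (p : ℤ) ∣ D := by exact_mod_cast hpD
  have hpa := hpDi.trans hDa
  have hpb := hpDi.trans hDb
  have hpr : (p : ℤ) ∣ r := by
    apply hpi.dvd_of_dvd_pow (n := 3)
    have : r ^ 3 = a * r - b := by linarith
    rw [this]
    exact dvd_sub (hpa.mul_right r) hpb
  have hb : b = a * r - r ^ 3 := by linarith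
  have hdisc : c ^ 2 = (4 * a - 3 * r ^ 2) * (3 * r ^ 2 - a) ^ 2 := by
    have : c ^ 2 = 4 * a ^ 3 - 27 * b ^ 2 := by linarith
    rw [this, hb]; ring
  have hdv : (3 * r ^ 2 - a) ∣ c := by
    rw [← Int.pow_dvd_pow_iff (n := 2) (by norm_num), hdisc]
    exact dvd_mul_left _ _
  obtain ⟨e, he⟩ := hdv
  have hne : 3 * r ^ 2 - a ≠ 0 := by
    intro h0
    rw [h0] at he
    simp at he
    exact hc he
  have he2 : e ^ 2 = 4 * a - 3 * r ^ 2 := by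
    apply mul_right_cancel₀ (pow_ne_zero 2 hne)
    rw [← hdisc, he]; ring
  have hpr2 : (p : ℤ) ^ 2 ∣ r ^ 2 := pow_dvd_pow_of_dvd hpr 2
  have hpe : (p : ℤ) ∣ e := by
    apply hpi.dvd_of_dvd_pow (n := 2)
    rw [he2]
    exact dvd_sub (hpa.mul_left 4) ((hpr.trans (dvd_pow_self r two_ne_zero)).mul_left 3)
  have hpe2 : (p : ℤ) ^ 2 ∣ e ^ 2 := pow_dvd_pow_of_dvd hpe 2
  have h4a : (p : ℤ) ^ 2 ∣ 4 * a := by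
    have : 4 * a = e ^ 2 + 3 * r ^ 2 := by linarith
    rw [this]
    exact dvd_add hpe2 (hpr2.mul_left 3)
  have hcop : IsCoprime ((p : ℤ) ^ 2) 4 := by
    have : IsCoprime (p : ℤ) 2 := by
      have := (Nat.coprime_primes hp Nat.prime_two).mpr hp2
      exact_mod_cast Nat.isCoprime_iff_coprime.mpr this
    exact (this.pow (m := 2) (n := 2))
  have hpa2 : (p : ℤ) ^ 2 ∣ a := hcop.dvd_of_dvd_mul_left h4a
  have hpb3 : (p : ℤ) ^ 3 ∣ b := by
    rw [hb]
    refine dvd_sub ?_ (pow_dvd_pow_of_dvd hpr 3)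
    rw [pow_succ]
    exact mul_dvd_mul hpa2 hpr
  refine hs p hp ?_ hpb3
  rw [← hg]
  have : ((p ^ 2 : ℕ) : ℤ) ∣ (Int.gcd b a : ℤ) := by
    push_cast
    exact Int.dvd_coe_gcd ((pow_dvd_pow _ (by norm_num)).trans hpb3) hpa2
  exact_mod_cast this

open Polynomial in
theorem stmt_19 (D : ℕ) (hD : Admissible D) (hD1 : 1 < D) (a b : ℤ) :
    (Irreducible (X ^ 3 - C (a : ℚ) * X + C (b : ℚ)) ∧ Int.gcd a b = D ∧
      (∃ c : ℤ, c ≠ 0 ∧ 4 * a ^ 3 - 27 * b ^ 2 = c ^ 2) ∧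
      (∀ ℓ : ℕ, ℓ.Prime → (ℓ : ℤ) ^ 2 ∣ a → ¬ ((ℓ : ℤ) ^ 3 ∣ b))) ↔
    (∃ c : ℤ, (c, b, a) ∈ X1Dstar D) := by
  constructor
  · rintro ⟨hirr, hg, ⟨c, hc, hd⟩, hl⟩
    have hb : b ≠ 0 := by
      rintro rfl
      have hdeg := Polynomial.degree_eq_one_of_irreducible_of_root hirr (x := 0) (by simp)
      have hm : (X ^ 3 - C (a : ℚ) * X + C ((0 : ℤ) : ℚ)).degree = 3 := by compute_degree!
      rw [hm] at hdeg
      norm_num at hdeg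
    have ha : a ≠ 0 := by
      rintro rfl
      have := sq_nonneg b
      have : 0 < c ^ 2 := by positivity
      nlinarith
    refine ⟨c, ⟨?_, ?_, ?_⟩, ?_⟩
    · exact mul_ne_zero (mul_ne_zero hc hb) ha
    · show c ^ 2 + 27 * b ^ 2 = 4 * a ^ 3
      linarith
    · show Int.gcd b a = D
      rw [Int.gcd_comm, hg]
    · intro ℓ hℓ hd
      apply hl ℓ hℓ
      have h1 : (D : ℤ) ∣ a := hg ▸ Int.gcd_dvd_left ..
      have h2 : ((ℓ : ℤ) ^ 2) ∣ D := by exact_mod_cast hd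
      exact h2.trans h1
  · rintro ⟨c, ⟨h0, h1, hg⟩, hs⟩
    change c * b * a ≠ 0 at h0
    change c ^ 2 + 27 * b ^ 2 = 4 * a ^ 3 at h1
    change Int.gcd b a = D at hg
    change ∀ ℓ : ℕ, ℓ.Prime → ℓ ^ 2 ∣ D → ¬ ((ℓ : ℤ) ^ 3 ∣ b) at hs
    have hc : c ≠ 0 := fun h => h0 (by simp [h])
    refine ⟨?_, by rw [Int.gcd_comm, hg], ⟨c, hc, by linarith⟩, ?_⟩
    · have hm : (X ^ 3 - C (a : ℚ) * X + C (b : ℚ)).natDegree = 3 := by compute_degree!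
      refine Polynomial.irreducible_of_degree_le_three_of_not_isRoot (by rw [hm]; decide) ?_
      intro x hx
      have hx' : x ^ 3 - a * x + b = 0 := by simpa using hx
      have hint : IsIntegral ℤ x := by
        refine ⟨X ^ 3 - C a * X + C b, by monicity!, ?_⟩
        simp only [eval₂_add, eval₂_sub, eval₂_mul, eval₂_pow, eval₂_X, eval₂_C]
        simpa using hx'
      obtain ⟨r, hr⟩ := IsIntegrallyClosed.isIntegral_iff.mp hint
      have hr' : (r : ℚ) = x := by simpa using hr
      rw [← hr'] at hx'
      exact aux_root D hD hD1 a b c r hc h1 hg hs (by exact_mod_cast hx')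
    · intro ℓ hℓ ha hb
      refine hs ℓ hℓ ?_ hb
      rw [← hg]
      have : ((ℓ ^ 2 : ℕ) : ℤ) ∣ (Int.gcd b a : ℤ) := by
        push_cast
        exact Int.dvd_coe_gcd ((pow_dvd_pow _ (by norm_num)).trans hb) ha
      exact_mod_cast this
end
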